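/- arXiv:2302.11946 — 2 statements merged into one kernel-verified Lean document; each statement's English description precedes it below -/
import Mathlib

section
/- There exists a constant C₃ > 0, depending only on d, a, μ⁻ and μ⁺, such that every time-periodic solution β ∈ L²(𝕋^{d+1}) ∩ H¹((0,1); L²(𝕋^d)) of ∂_s β − A(s)β = θ with ∫_{𝕋^{d+1}} β dξ ds = 0 satisfies ‖β‖_{L²(𝕋^{d+1})} ≤ C₃ ‖θ‖_{L²(𝕋^{d+1})}. -/
open MeasureTheory

noncomputable section

/-- The periodicity cell `[0,1)^d`, identified with the torus `𝕋^d`. -/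
def cube (d : ℕ) : Set (Fin d → ℝ) := Set.univ.pi fun _ => Set.Ico (0 : ℝ) 1

/-- The operator `A(s)` applied pointwise. -/
def Aop {d : ℕ} (a : (Fin d → ℝ) → ℝ) (μ : (Fin d → ℝ) → (Fin d → ℝ) → ℝ → ℝ)
    (s : ℝ) (v : (Fin d → ℝ) → ℝ) (ξ : Fin d → ℝ) : ℝ :=
  ∫ η, a (ξ - η) * μ ξ η s * (v η - v ξ)

/-- `β` is a time-periodic solution, in `L²(𝕋^{d+1}) ∩ H¹((0,1); L²(𝕋^d))`, of
`∂_s β - A(s)β = θ` (in the equivalent integrated-in-time formulation). -/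
def IsCellSol {d : ℕ} (a : (Fin d → ℝ) → ℝ) (μ : (Fin d → ℝ) → (Fin d → ℝ) → ℝ → ℝ)
    (θ : (Fin d → ℝ) → ℝ → ℝ) (β : (Fin d → ℝ) → ℝ → ℝ) : Prop :=
  Measurable (fun p : (Fin d → ℝ) × ℝ => β p.1 p.2) ∧
  (∀ ξ s, ∀ k : Fin d → ℤ, β (ξ + fun i => (k i : ℝ)) s = β ξ s) ∧
  (∀ ξ s, β ξ (s + 1) = β ξ s) ∧
  IntegrableOn (fun p : (Fin d → ℝ) × ℝ => (β p.1 p.2) ^ 2)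
    (cube d ×ˢ Set.Ioo (0 : ℝ) 1) ∧
  (∀ᵐ ξ ∂(volume : Measure (Fin d → ℝ)), ∀ s ∈ Set.Icc (0 : ℝ) 1,
    β ξ s = β ξ 0 + ∫ τ in (0 : ℝ)..s, (Aop a μ τ (fun η => β η τ) ξ + θ ξ τ))

/-!
This is the energy method, with a nonlocal Poincaré inequality in place of the classical one.

Testing the equation with `β` and using periodicity in time, `∫ β θ = -∫ β A(s)β`, and by Green's
formula for symmetric jumps the right-hand side is a Dirichlet form which dominates
`(μ⁻ / 2) ∫ a(z) N(z) dz`, where `N(z) = ‖β(· + z) - β‖²` is the energy of the translation by `z`.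
The function `N` is even and satisfies `N(x + y) ≤ 2 (N x + N y)`. A compact set
`K ⊆ {a ≥ δ}` of positive measure meets each of its small translates in at least half of its
measure, so `w` and `w - z` are both in `K` for many `w`, and `∫ a N` controls `N(z)` for small `z`;
doubling carries this to all `z` in a ball which covers the torus. Averaging `N` over the torus
gives twice the variance of `β(·, s)`.

By the same symmetry `A(s)β` has spatial mean zero. So the spatial mean of `β` is a periodic
primitive of the spatial mean of `θ`; as its time average vanishes, it is at most `‖θ‖`. Together,
`‖β‖² ≤ C ‖β‖ ‖θ‖ + ‖θ‖²`.
-/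

open Filter ProbabilityTheory
open scoped ENNReal NNReal Pointwise Topology

section QuasiSubadditive

/-- An even function with values in `[0, ∞]` which is subadditive up to the factor `A`. The model
is `z ↦ ‖v (· + z) - v‖²`, with `A = 2`. -/
structure IsQuasiSubadditive {G : Type*} [AddGroup G] (A : ℝ≥0) (N : G → ℝ≥0∞) : Prop where
  map_neg : ∀ z, N (-z) = N z
  map_add_le : ∀ x y, N (x + y) ≤ A * (N x + N y)

theorem exists_isCompact_subset_superlevel {X : Type*} [TopologicalSpace X] [MeasurableSpace X]
    {μ : Measure X} [μ.InnerRegular] {f : X → ℝ≥0∞} (hf : Measurable f) (hf0 : ∫⁻ z, f z ∂μ ≠ 0) :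
    ∃ δ : ℝ≥0, δ ≠ 0 ∧ ∃ K ⊆ {z | δ ≤ f z}, IsCompact K ∧ μ K ≠ 0 := by
  have hsupport : Function.support f ⊆ ⋃ n : ℕ, {z | (((n + 1 : ℝ≥0)⁻¹ : ℝ≥0) : ℝ≥0∞) ≤ f z} := by
    intro z hz
    obtain ⟨n, hn⟩ := ENNReal.exists_inv_nat_lt hz
    refine Set.mem_iUnion_of_mem n (le_trans ?_ hn.le)
    rw [ENNReal.coe_inv (by positivity)]
    gcongr
    push_cast
    exact le_self_add
  have hpos : 0 < μ (Function.support f) :=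
    (lintegral_pos_iff_support hf).1 (pos_iff_ne_zero.2 hf0)
  obtain ⟨n, hn⟩ := exists_measure_pos_of_not_measure_iUnion_null
    (hpos.trans_le (measure_mono hsupport)).ne'
  obtain ⟨K, hKf, hK, hμK⟩ := (measurableSet_le measurable_const hf).exists_lt_isCompact hn
  exact ⟨(n + 1 : ℝ≥0)⁻¹, by positivity, K, hKf, hK, hμK.ne'⟩

section Group

variable {G : Type*} [AddGroup G] [TopologicalSpace G] [IsTopologicalAddGroup G]
  [MeasurableSpace G] [BorelSpace G] {μ : Measure G}

theorem eventually_measure_le_two_mul_measure_inter_vadd [LocallyCompactSpace G] [T2Space G]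
    [μ.IsAddHaarMeasure] [μ.InnerRegularCompactLTTop] {K : Set G} (hK : IsCompact K) :
    ∀ᶠ z in 𝓝 (0 : G), μ K ≤ (2 : ℝ≥0∞) * μ (K ∩ (z +ᵥ K)) := by
  rcases eq_or_ne (μ K) 0 with h0 | h0
  · simp [h0]
  have hhalf : μ K / 2 ≠ 0 := (ENNReal.half_pos h0).ne'
  have hhalf_ne_top : μ K / 2 ≠ ∞ := ENNReal.div_ne_top hK.measure_ne_top two_ne_zero
  filter_upwards [eventually_nhds_zero_measure_vadd_sdiff_lt (μ := μ) hK hK.isClosed hhalf]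
    with z hz
  have hsplit := measure_inter_add_sdiff (μ := μ) (z +ᵥ K) hK.measurableSet
  rw [measure_vadd, Set.inter_comm] at hsplit
  have hhalf_le : μ K / 2 ≤ μ (K ∩ (z +ᵥ K)) := by
    refine (ENNReal.add_le_add_iff_right hhalf_ne_top).1 ?_
    calc μ K / 2 + μ K / 2 = μ (K ∩ (z +ᵥ K)) + μ ((z +ᵥ K) \ K) := by
          rw [ENNReal.add_halves, hsplit]
      _ ≤ μ (K ∩ (z +ᵥ K)) + μ K / 2 := by gcongr
  rwa [ENNReal.div_le_iff two_ne_zero ENNReal.ofNat_ne_top, mul_comm] at hhalf_le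

theorem IsQuasiSubadditive.measure_inter_vadd_mul_le [μ.IsAddLeftInvariant] {A : ℝ≥0}
    {N : G → ℝ≥0∞} (hN : IsQuasiSubadditive A N) (hNm : Measurable N) {K : Set G}
    (hK : MeasurableSet K) (z : G) :
    μ (K ∩ (z +ᵥ K)) * N z ≤ 2 * A * ∫⁻ w in K, N w ∂μ := by
  have htranslate : ∫⁻ w in z +ᵥ K, N (-z + w) ∂μ = ∫⁻ w in K, N w ∂μ := by
    have hpre : z +ᵥ K = (fun w ↦ -z + w) ⁻¹' K := by
      ext w; simp [Set.mem_vadd_set_iff_neg_vadd_mem]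
    rw [hpre, (measurePreserving_add_left μ (-z)).setLIntegral_comp_preimage hK hNm]
  calc μ (K ∩ (z +ᵥ K)) * N z = ∫⁻ _ in K ∩ (z +ᵥ K), N z ∂μ := by
        rw [setLIntegral_const, mul_comm]
    _ ≤ ∫⁻ w in K ∩ (z +ᵥ K), A * (N w + N (-z + w)) ∂μ := by
        refine lintegral_mono fun w ↦ ?_
        simpa [← hN.map_neg (-z + w)] using hN.map_add_le w (-(-z + w))
    _ = A * (∫⁻ w in K ∩ (z +ᵥ K), N w ∂μ + ∫⁻ w in K ∩ (z +ᵥ K), N (-z + w) ∂μ) := by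
        rw [lintegral_const_mul' _ _ ENNReal.coe_ne_top, lintegral_add_left hNm]
    _ ≤ A * (∫⁻ w in K, N w ∂μ + ∫⁻ w in z +ᵥ K, N (-z + w) ∂μ) := by
        gcongr
        · exact Set.inter_subset_left
        · exact Set.inter_subset_right
    _ = 2 * A * ∫⁻ w in K, N w ∂μ := by rw [htranslate]; ring

theorem exists_eventually_forall_le_lintegral_withDensity [LocallyCompactSpace G] [T2Space G]
    [μ.IsAddHaarMeasure] [μ.InnerRegular] {f : G → ℝ≥0∞} (hf : Measurable f)
    (hf0 : ∫⁻ z, f z ∂μ ≠ 0) (A : ℝ≥0) :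
    ∃ C : ℝ≥0, ∀ᶠ z in 𝓝 (0 : G), ∀ N : G → ℝ≥0∞, IsQuasiSubadditive A N → Measurable N →
      N z ≤ C * ∫⁻ w, N w ∂μ.withDensity f := by
  obtain ⟨δ, hδ, K, hKf, hK, hμK⟩ := exists_isCompact_subset_superlevel hf hf0
  have hμK' : μ K ≠ ∞ := hK.measure_ne_top
  have hC : (4 * A / (δ * μ K) : ℝ≥0∞) ≠ ∞ := by finiteness
  refine ⟨(4 * A / (δ * μ K)).toNNReal, ?_⟩
  filter_upwards [eventually_measure_le_two_mul_measure_inter_vadd (μ := μ) hK] with z hz N hN hNm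
  have hK_le : δ * ∫⁻ w in K, N w ∂μ ≤ ∫⁻ w, N w ∂μ.withDensity f := by
    rw [lintegral_withDensity_eq_lintegral_mul _ hf hNm, ← lintegral_const_mul _ hNm]
    calc ∫⁻ w in K, δ * N w ∂μ ≤ ∫⁻ w in K, f w * N w ∂μ :=
          setLIntegral_mono (hf.mul hNm) fun w hw ↦ by gcongr; exact hKf hw
      _ ≤ ∫⁻ w, f w * N w ∂μ := setLIntegral_le_lintegral _ _
  rw [ENNReal.coe_toNNReal hC, ENNReal.mul_comm_div, mul_div_assoc',
    ENNReal.le_div_iff_mul_le (by simp [hδ, hμK]) (.inl (by finiteness))]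
  calc N z * (δ * μ K) ≤ N z * (δ * (2 * μ (K ∩ (z +ᵥ K)))) := by gcongr
    _ = 2 * δ * (μ (K ∩ (z +ᵥ K)) * N z) := by ring
    _ ≤ 2 * δ * (2 * A * ∫⁻ w in K, N w ∂μ) := by
        gcongr 2 * δ * ?_
        exact hN.measure_inter_vadd_mul_le hNm hK.measurableSet z
    _ = 4 * A * (δ * ∫⁻ w in K, N w ∂μ) := by ring
    _ ≤ 4 * A * ∫⁻ w, N w ∂μ.withDensity f := by gcongr

end Group

section NormedSpace

variable {E : Type*} [NormedAddCommGroup E] [NormedSpace ℝ E]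

theorem IsQuasiSubadditive.two_pow_smul_le {A : ℝ≥0} {N : E → ℝ≥0∞}
    (hN : IsQuasiSubadditive A N) (k : ℕ) (z : E) :
    N ((2 : ℝ) ^ k • z) ≤ (2 * A) ^ k * N z := by
  induction k with
  | zero => simp
  | succ k ih =>
    calc N ((2 : ℝ) ^ (k + 1) • z) = N ((2 : ℝ) ^ k • z + (2 : ℝ) ^ k • z) := by
          rw [← two_smul ℝ, smul_smul, pow_succ']
      _ ≤ A * (N ((2 : ℝ) ^ k • z) + N ((2 : ℝ) ^ k • z)) := hN.map_add_le _ _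
      _ ≤ A * ((2 * A) ^ k * N z + (2 * A) ^ k * N z) := by gcongr
      _ = (2 * A) ^ (k + 1) * N z := by ring

theorem exists_forall_le_lintegral_withDensity [FiniteDimensional ℝ E] [MeasurableSpace E]
    [BorelSpace E] {μ : Measure E} [μ.IsAddHaarMeasure] {f : E → ℝ≥0∞} (hf : Measurable f)
    (hf0 : ∫⁻ z, f z ∂μ ≠ 0) (A : ℝ≥0) (R : ℝ) :
    ∃ C : ℝ≥0, ∀ N : E → ℝ≥0∞, IsQuasiSubadditive A N → Measurable N →
      ∀ z, ‖z‖ ≤ R → N z ≤ C * ∫⁻ w, N w ∂μ.withDensity f := by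
  obtain ⟨C, hC⟩ := exists_eventually_forall_le_lintegral_withDensity hf hf0 A
  obtain ⟨r, hr, hball⟩ := Metric.eventually_nhds_iff.1 hC
  obtain ⟨k, hk⟩ := pow_unbounded_of_one_lt (R / r) one_lt_two
  refine ⟨(2 * A) ^ k * C, fun N hN hNm z hz ↦ ?_⟩
  have hsmall : dist (((2 : ℝ) ^ k)⁻¹ • z) 0 < r := by
    rw [div_lt_iff₀ hr] at hk
    rw [dist_zero_right, norm_smul, norm_inv, norm_pow, Real.norm_two,
      inv_mul_lt_iff₀ (by positivity)]
    exact hz.trans_lt hk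
  calc N z = N ((2 : ℝ) ^ k • ((2 : ℝ) ^ k)⁻¹ • z) := by
        rw [smul_inv_smul₀ (by positivity)]
    _ ≤ (2 * A) ^ k * N (((2 : ℝ) ^ k)⁻¹ • z) := hN.two_pow_smul_le k _
    _ ≤ (2 * A) ^ k * (C * ∫⁻ w, N w ∂μ.withDensity f) := by gcongr; exact hball hsmall N hN hNm
    _ = _ := by push_cast; ring

end NormedSpace

end QuasiSubadditive

theorem isNegInvariant_withDensity {E : Type*} [MeasurableSpace E] [InvolutiveNeg E]
    [MeasurableNeg E] {ν : Measure E} [ν.IsNegInvariant] {f : E → ℝ≥0∞}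
    (hf : ∀ z, f (-z) = f z) : (ν.withDensity f).IsNegInvariant := by
  refine ⟨Measure.ext fun s hs ↦ ?_⟩
  rw [Measure.neg_apply, withDensity_apply _ hs, withDensity_apply _ hs.neg]
  have h := (Measure.measurePreserving_neg ν).setLIntegral_comp_preimage_emb
    (MeasurableEquiv.neg E).measurableEmbedding f s
  simpa only [hf, Set.neg_preimage] using h

section JumpOperator

variable {G X : Type*} [AddGroup G] [AddGroup X]

/-- The jump `x ↦ x + φ z` together with the reverse jump: the involution exchanging the two
endpoints of a jump, on pairs `(z, x)` of a jump vector and a starting point. -/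
def jumpFlip (φ : G →+ X) (q : G × X) : G × X := (-q.1, q.2 + φ q.1)

/-- The variation of `v` along the jump from `x` to `x + φ z`. -/
def increment (φ : G →+ X) (v : X → ℝ) (q : G × X) : ℝ := v (q.2 + φ q.1) - v q.2

/-- The operator `v ↦ ∫ W(z, x) (v(x + φ z) - v(x)) dα(z)`; in the notation of the theorem `α` has
density `a` and `W(z, ξ) = μ(ξ, ξ + z, s)`. -/
def jumpOp [MeasurableSpace G] (α : Measure G) (φ : G →+ X) (W : G × X → ℝ) (v : X → ℝ) (x : X) :
    ℝ :=
  ∫ z, W (z, x) * increment φ v (z, x) ∂α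

/-- A measurable jump rate, bounded by `M`, which is the same for a jump and for its reverse. -/
structure IsJumpRate [MeasurableSpace G] [MeasurableSpace X] (φ : G →+ X) (M : ℝ)
    (W : G × X → ℝ) : Prop where
  measurable : Measurable W
  abs_le : ∀ q, |W q| ≤ M
  jumpFlip_eq : ∀ q, W (jumpFlip φ q) = W q

theorem increment_jumpFlip (φ : G →+ X) (v : X → ℝ) (q : G × X) :
    increment φ v (jumpFlip φ q) = -increment φ v q := by
  simp [increment, jumpFlip]

theorem increment_one (φ : G →+ X) (q : G × X) : increment φ (fun _ ↦ 1) q = 0 := sub_self _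

variable [MeasurableSpace G] [MeasurableSpace X] [MeasurableNeg G] [MeasurableAdd₂ X]
  {α : Measure G} {m : Measure X} {φ : G →+ X} {M : ℝ} {W : G × X → ℝ} {v w : X → ℝ}

theorem measurePreserving_jumpFlip [SFinite α] [SFinite m] [α.IsNegInvariant] (hφ : Measurable φ)
    (hm : ∀ z, MeasurePreserving (· + φ z) m m) :
    MeasurePreserving (jumpFlip φ) (α.prod m) (α.prod m) :=
  (Measure.measurePreserving_neg α).skew_product (g := fun z x ↦ x + φ z)
    (measurable_snd.add (hφ.comp measurable_fst)) (ae_of_all _ fun z ↦ (hm z).map_eq)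

variable [IsFiniteMeasure α]

theorem memLp_comp_jump [SFinite m] [α.IsNegInvariant] (hφ : Measurable φ)
    (hm : ∀ z, MeasurePreserving (· + φ z) m m) (hv : MemLp v 2 m) :
    MemLp (fun q ↦ v (q.2 + φ q.1)) 2 (α.prod m) :=
  (hv.comp_snd α).comp_measurePreserving (measurePreserving_jumpFlip hφ hm)

theorem memLp_increment [SFinite m] [α.IsNegInvariant] (hφ : Measurable φ)
    (hm : ∀ z, MeasurePreserving (· + φ z) m m) (hv : MemLp v 2 m) :
    MemLp (increment φ v) 2 (α.prod m) :=
  (memLp_comp_jump hφ hm hv).sub (hv.comp_snd α)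

theorem IsJumpRate.memLp_mul_increment [SFinite m] [α.IsNegInvariant] (hW : IsJumpRate φ M W)
    (hφ : Measurable φ) (hm : ∀ z, MeasurePreserving (· + φ z) m m) (hv : MemLp v 2 m) :
    MemLp (fun q ↦ W q * increment φ v q) 2 (α.prod m) := by
  have hincr := memLp_increment (α := α) hφ hm hv
  refine hincr.of_le_mul (c := M) (hW.measurable.aestronglyMeasurable.mul hincr.1)
    (ae_of_all _ fun q ↦ ?_)
  rw [norm_mul]
  exact mul_le_mul_of_nonneg_right (hW.abs_le q) (norm_nonneg _)

theorem IsJumpRate.integrable_mul_jumpOp [SFinite m] [α.IsNegInvariant] (hW : IsJumpRate φ M W)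
    (hφ : Measurable φ) (hm : ∀ z, MeasurePreserving (· + φ z) m m) (hv : MemLp v 2 m)
    (hw : MemLp w 2 m) : Integrable (fun x ↦ w x * jumpOp α φ W v x) m := by
  have h := ((hw.comp_snd α).integrable_mul (hW.memLp_mul_increment hφ hm hv)).integral_prod_right
  simpa only [jumpOp, Pi.mul_apply, integral_const_mul] using h

/-- Green's formula, obtained by averaging over the two directions of each jump. -/
theorem IsJumpRate.two_mul_integral_mul_jumpOp [SFinite m] [α.IsNegInvariant]
    (hW : IsJumpRate φ M W) (hφ : Measurable φ) (hm : ∀ z, MeasurePreserving (· + φ z) m m)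
    (hv : MemLp v 2 m) (hw : MemLp w 2 m) :
    2 * ∫ x, w x * jumpOp α φ W v x ∂m =
      -∫ q, W q * increment φ v q * increment φ w q ∂α.prod m := by
  have hWv := hW.memLp_mul_increment (α := α) hφ hm hv
  have hstart : Integrable (fun q : G × X ↦ W q * increment φ v q * w q.2) (α.prod m) :=
    hWv.integrable_mul (hw.comp_snd α)
  have hend : Integrable (fun q : G × X ↦ W q * increment φ v q * w (q.2 + φ q.1)) (α.prod m) :=
    hWv.integrable_mul (memLp_comp_jump hφ hm hw)
  have hfubini : ∫ x, w x * jumpOp α φ W v x ∂m =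
      ∫ q, W q * increment φ v q * w q.2 ∂α.prod m := by
    rw [integral_prod_symm _ hstart]
    simp only [jumpOp, integral_mul_const, mul_comm (w _)]
  have hflip : ∫ q, W q * increment φ v q * w q.2 ∂α.prod m =
      -∫ q, W q * increment φ v q * w (q.2 + φ q.1) ∂α.prod m := by
    have hmp := measurePreserving_jumpFlip (α := α) hφ hm
    have hcomp := integral_map hmp.aemeasurable (hmp.map_eq ▸ hstart.aestronglyMeasurable)
    rw [hmp.map_eq] at hcomp
    rw [hcomp, ← integral_neg]
    simp only [hW.jumpFlip_eq, increment_jumpFlip, mul_neg, neg_mul]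
    rfl
  calc 2 * ∫ x, w x * jumpOp α φ W v x ∂m
      = -(∫ q, W q * increment φ v q * w (q.2 + φ q.1) ∂α.prod m -
          ∫ q, W q * increment φ v q * w q.2 ∂α.prod m) := by rw [hfubini]; linarith
    _ = -∫ q, W q * increment φ v q * increment φ w q ∂α.prod m := by
        rw [← integral_sub hend hstart]
        simp only [increment, mul_sub]

theorem IsJumpRate.integral_jumpOp_eq_zero [IsFiniteMeasure m] [α.IsNegInvariant]
    (hW : IsJumpRate φ M W) (hφ : Measurable φ) (hm : ∀ z, MeasurePreserving (· + φ z) m m)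
    (hv : MemLp v 2 m) : ∫ x, jumpOp α φ W v x ∂m = 0 := by
  have h := hW.two_mul_integral_mul_jumpOp (α := α) hφ hm hv (memLp_const 1)
  simpa [increment_one] using h

theorem IsJumpRate.mul_integral_sq_increment_le [SFinite m] [α.IsNegInvariant]
    (hW : IsJumpRate φ M W) (hφ : Measurable φ) (hm : ∀ z, MeasurePreserving (· + φ z) m m)
    (hv : MemLp v 2 m) {μm : ℝ} (hWμm : ∀ q, μm ≤ W q) :
    μm * ∫ q, increment φ v q ^ 2 ∂α.prod m ≤ -(2 * ∫ x, v x * jumpOp α φ W v x ∂m) := by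
  have hincr := memLp_increment (α := α) hφ hm hv
  rw [hW.two_mul_integral_mul_jumpOp hφ hm hv hv, neg_neg, ← integral_const_mul]
  refine integral_mono (hincr.integrable_sq.const_mul _)
    ((hW.memLp_mul_increment hφ hm hv).integrable_mul hincr) fun q ↦ ?_
  calc μm * increment φ v q ^ 2 ≤ W q * increment φ v q ^ 2 :=
        mul_le_mul_of_nonneg_right (hWμm q) (sq_nonneg _)
    _ = W q * increment φ v q * increment φ v q := by ring

end JumpOperator

section Poincare

variable {T : Type*} [MeasurableSpace T] {m : Measure T} {v : T → ℝ}

theorem integral_prod_sub_sq_eq_two_mul_variance [IsProbabilityMeasure m] (hv : MemLp v 2 m) :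
    ∫ p, (v p.2 - v p.1) ^ 2 ∂m.prod m = 2 * Var[v; m] := by
  have hfst := (hv.comp_fst m).integrable_sq
  have hsnd := (hv.comp_snd m).integrable_sq
  have hsum : Integrable (fun p : T × T ↦ v p.2 ^ 2 + v p.1 ^ 2) (m.prod m) := hsnd.add hfst
  have hcross := (hv.integrable one_le_two).mul_prod (hv.integrable one_le_two)
  calc ∫ p, (v p.2 - v p.1) ^ 2 ∂m.prod m
      = ∫ p, (v p.2 ^ 2 + v p.1 ^ 2 - 2 * (v p.1 * v p.2)) ∂m.prod m := by
        congr 1 with p; ring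
    _ = ∫ x, v x ^ 2 ∂m + ∫ x, v x ^ 2 ∂m - 2 * ((∫ x, v x ∂m) * ∫ x, v x ∂m) := by
        rw [integral_sub hsum (hcross.const_mul 2), integral_add hsnd hfst,
          integral_const_mul, integral_prod_mul, integral_fun_snd (fun x ↦ v x ^ 2),
          integral_fun_fst (fun x ↦ v x ^ 2)]
        simp
    _ = 2 * Var[v; m] := by rw [variance_eq_sub hv]; simp only [Pi.pow_apply]; ring

variable [AddCommGroup T]

/-- The squared `L²(m)` distance between `v` and its translate by `y`. -/
def translationEnergy (m : Measure T) (v : T → ℝ) (y : T) : ℝ≥0∞ :=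
  ∫⁻ x, ENNReal.ofReal ((v (x + y) - v x) ^ 2) ∂m

variable [MeasurableAdd₂ T]

theorem measurable_translationEnergy [SFinite m] (hv : Measurable v) :
    Measurable (translationEnergy m v) := by
  unfold translationEnergy
  fun_prop

theorem isQuasiSubadditive_translationEnergy [m.IsAddRightInvariant] (hv : Measurable v) :
    IsQuasiSubadditive 2 (translationEnergy m v) where
  map_neg y := by
    have hmeas : Measurable fun x ↦ ENNReal.ofReal ((v (x + -y) - v x) ^ 2) := by fun_prop
    calc translationEnergy m v (-y)
        = ∫⁻ x, ENNReal.ofReal ((v (x + y + -y) - v (x + y)) ^ 2) ∂m :=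
          ((measurePreserving_add_right m y).lintegral_comp hmeas).symm
      _ = translationEnergy m v y := by
          simp only [add_neg_cancel_right, translationEnergy, sub_sq_comm]
  map_add_le y₁ y₂ := by
    have hmeas (y : T) : Measurable fun x ↦ ENNReal.ofReal ((v (x + y) - v x) ^ 2) := by fun_prop
    calc translationEnergy m v (y₁ + y₂)
        ≤ ∫⁻ x, 2 * (ENNReal.ofReal ((v (x + y₁) - v x) ^ 2) +
            ENNReal.ofReal ((v (x + y₁ + y₂) - v (x + y₁)) ^ 2)) ∂m := by
          refine lintegral_mono fun x ↦ ?_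
          rw [← ENNReal.ofReal_add (sq_nonneg _) (sq_nonneg _), ← ENNReal.ofReal_ofNat,
            ← ENNReal.ofReal_mul zero_le_two, add_assoc]
          refine ENNReal.ofReal_le_ofReal ?_
          have h := add_sq_le (a := v (x + y₁) - v x) (b := v (x + (y₁ + y₂)) - v (x + y₁))
          rwa [sub_add_sub_cancel'] at h
      _ = 2 * (translationEnergy m v y₁ + translationEnergy m v y₂) := by
          rw [lintegral_const_mul _ (by fun_prop), lintegral_add_left (hmeas y₁),
            (measurePreserving_add_right m y₁).lintegral_comp (hmeas y₂)]
          rfl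

theorem lintegral_translationEnergy [m.IsAddLeftInvariant] [IsProbabilityMeasure m]
    (hvm : Measurable v) (hv : MemLp v 2 m) :
    ∫⁻ y, translationEnergy m v y ∂m = ENNReal.ofReal (2 * Var[v; m]) := by
  have hmeas : Measurable fun p : T × T ↦ ENNReal.ofReal ((v (p.2 + p.1) - v p.2) ^ 2) := by
    fun_prop
  have hint : Integrable (fun p : T × T ↦ (v p.2 - v p.1) ^ 2) (m.prod m) :=
    ((hv.comp_snd m).sub (hv.comp_fst m)).integrable_sq
  calc ∫⁻ y, translationEnergy m v y ∂m
      = ∫⁻ x, ∫⁻ y, ENNReal.ofReal ((v (x + y) - v x) ^ 2) ∂m ∂m :=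
        lintegral_lintegral_swap hmeas.aemeasurable
    _ = ∫⁻ x, ∫⁻ y, ENNReal.ofReal ((v y - v x) ^ 2) ∂m ∂m := by
        congr 1 with x
        exact lintegral_add_left_eq_self (fun y ↦ ENNReal.ofReal ((v y - v x) ^ 2)) x
    _ = ∫⁻ p, ENNReal.ofReal ((v p.2 - v p.1) ^ 2) ∂m.prod m :=
        (lintegral_prod _ hint.aestronglyMeasurable.aemeasurable.ennreal_ofReal).symm
    _ = ENNReal.ofReal (2 * Var[v; m]) := by
        rw [← integral_prod_sub_sq_eq_two_mul_variance hv, ofReal_integral_eq_lintegral_ofReal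
          hint (ae_of_all _ fun _ ↦ sq_nonneg _)]

theorem lintegral_translationEnergy_comp {G : Type*} [AddGroup G] [MeasurableSpace G]
    [MeasurableNeg G] {α : Measure G} [IsFiniteMeasure α] [α.IsNegInvariant] [SFinite m]
    [m.IsAddRightInvariant] {φ : G →+ T} (hφ : Measurable φ) (hv : MemLp v 2 m) :
    ∫⁻ z, translationEnergy m v (φ z) ∂α =
      ENNReal.ofReal (∫ q, increment φ v q ^ 2 ∂α.prod m) := by
  have hincr := memLp_increment (α := α) hφ (fun z ↦ measurePreserving_add_right m (φ z)) hv
  rw [ofReal_integral_eq_lintegral_ofReal hincr.integrable_sq (ae_of_all _ fun _ ↦ sq_nonneg _),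
    lintegral_prod _ hincr.integrable_sq.aestronglyMeasurable.aemeasurable.ennreal_ofReal]
  rfl

variable {E : Type*} [NormedAddCommGroup E] [NormedSpace ℝ E] [FiniteDimensional ℝ E]
  [MeasurableSpace E] [BorelSpace E] {ν : Measure E} [ν.IsAddHaarMeasure]

theorem exists_two_mul_variance_le_integral_sq_increment [m.IsAddLeftInvariant]
    [IsProbabilityMeasure m] {φ : E →+ T} (hφ : Measurable φ) {R : ℝ}
    (hφR : Set.SurjOn φ (Metric.closedBall 0 R) Set.univ) {f : E → ℝ≥0∞} (hf : Measurable f)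
    (hf0 : ∫⁻ z, f z ∂ν ≠ 0) [IsFiniteMeasure (ν.withDensity f)]
    [(ν.withDensity f).IsNegInvariant] :
    ∃ C : ℝ≥0, ∀ v : T → ℝ, Measurable v → MemLp v 2 m →
      2 * Var[v; m] ≤ C * ∫ q, increment φ v q ^ 2 ∂(ν.withDensity f).prod m := by
  obtain ⟨C, hC⟩ := exists_forall_le_lintegral_withDensity hf hf0 2 R
  refine ⟨C, fun v hvm hv ↦ ?_⟩
  set D := ∫ q, increment φ v q ^ 2 ∂(ν.withDensity f).prod m
  have hD : 0 ≤ D := integral_nonneg fun _ ↦ sq_nonneg _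
  have henergy := isQuasiSubadditive_translationEnergy (m := m) hvm
  have hpullback : IsQuasiSubadditive 2 fun z ↦ translationEnergy m v (φ z) :=
    ⟨fun z ↦ by simp only [map_neg, henergy.map_neg],
      fun x y ↦ by simpa only [map_add] using henergy.map_add_le (φ x) (φ y)⟩
  have hpointwise (y : T) : translationEnergy m v y ≤ ENNReal.ofReal (C * D) := by
    obtain ⟨z, hz, rfl⟩ := hφR (Set.mem_univ y)
    rw [ENNReal.ofReal_mul C.coe_nonneg, ENNReal.ofReal_coe_nnreal,
      ← lintegral_translationEnergy_comp hφ hv]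
    exact hC _ hpullback ((measurable_translationEnergy hvm).comp hφ) z
      (by simpa using hz)
  have hmean : ENNReal.ofReal (2 * Var[v; m]) ≤ ENNReal.ofReal (C * D) := by
    rw [← lintegral_translationEnergy hvm hv]
    simpa using lintegral_mono hpointwise (μ := m)
  exact (ENNReal.ofReal_le_ofReal_iff (mul_nonneg C.coe_nonneg hD)).1 hmean

theorem exists_variance_le_neg_integral_mul_jumpOp [m.IsAddLeftInvariant]
    [IsProbabilityMeasure m] {φ : E →+ T} (hφ : Measurable φ) {R : ℝ}
    (hφR : Set.SurjOn φ (Metric.closedBall 0 R) Set.univ) {f : E → ℝ≥0∞} (hf : Measurable f)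
    (hf0 : ∫⁻ z, f z ∂ν ≠ 0) [IsFiniteMeasure (ν.withDensity f)]
    [(ν.withDensity f).IsNegInvariant] {μm : ℝ} (hμm : 0 < μm) :
    ∃ C : ℝ≥0, ∀ (M : ℝ) (W : E × T → ℝ) (v : T → ℝ), IsJumpRate φ M W → (∀ q, μm ≤ W q) →
      Measurable v → MemLp v 2 m →
      Var[v; m] ≤ C * -∫ x, v x * jumpOp (ν.withDensity f) φ W v x ∂m := by
  obtain ⟨C, hC⟩ := exists_two_mul_variance_le_integral_sq_increment (m := m) hφ hφR hf hf0
  refine ⟨C / μm.toNNReal, fun M W v hW hWμm hvm hv ↦ ?_⟩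
  have hdirichlet := hW.mul_integral_sq_increment_le (α := ν.withDensity f) hφ
    (fun z ↦ measurePreserving_add_right m (φ z)) hv hWμm
  have hpoincare := hC v hvm hv
  rw [NNReal.coe_div, Real.coe_toNNReal _ hμm.le, div_mul_eq_mul_div, le_div_iff₀ hμm]
  have := mul_le_mul_of_nonneg_left hdirichlet C.coe_nonneg
  have := mul_le_mul_of_nonneg_right hpoincare hμm.le
  linarith

end Poincare

section PeriodicPrimitive

/-- Lebesgue measure on one time period. -/
abbrev unitPeriod : Measure ℝ := volume.restrict (Set.Ioc 0 1)

instance isProbabilityMeasure_unitPeriod : IsProbabilityMeasure unitPeriod := ⟨by simp⟩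

/-- On `[0, 1]`, `u` is an absolutely continuous primitive of `g` with equal end values. -/
structure IsPeriodicPrimitive (u g : ℝ → ℝ) : Prop where
  intervalIntegrable : IntervalIntegrable g volume 0 1
  eq_add_integral : ∀ s ∈ Set.Icc (0 : ℝ) 1, u s = u 0 + ∫ t in 0..s, g t
  apply_one : u 1 = u 0

namespace IsPeriodicPrimitive

variable {u g : ℝ → ℝ} {s t : ℝ}

theorem integral_eq_zero (h : IsPeriodicPrimitive u g) : ∫ t in 0..1, g t = 0 := by
  have := h.eq_add_integral 1 (by simp)
  linarith [h.apply_one]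

theorem intervalIntegrable_of_mem (h : IsPeriodicPrimitive u g) (hs : s ∈ Set.Icc (0 : ℝ) 1)
    (ht : t ∈ Set.Icc (0 : ℝ) 1) : IntervalIntegrable g volume s t := by
  refine h.intervalIntegrable.mono_set ?_
  rw [Set.uIcc_of_le zero_le_one]
  exact Set.OrdConnected.uIcc_subset Set.ordConnected_Icc hs ht

/-- The derivative of `u²` is `2ug`, and `u²` takes the same value at both ends. -/
theorem integral_mul_eq_zero (h : IsPeriodicPrimitive u g) : ∫ s in 0..1, u s * g s = 0 := by
  set P : ℝ → ℝ := fun s ↦ u 0 + ∫ t in 0..s, g t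
  have hP : AbsolutelyContinuousOnInterval P 0 1 :=
    (LipschitzWith.const (u 0)).lipschitzOnWith.absolutelyContinuousOnInterval.add
      (h.intervalIntegrable.absolutelyContinuousOnInterval_intervalIntegral (by simp))
  have hparts : ∫ s in 0..1, (deriv P s * P s + P s * deriv P s) = 0 := by
    rw [hP.integral_deriv_mul_eq_sub hP]
    simp [P, h.integral_eq_zero]
  have hderiv : ∫ s in 0..1, (deriv P s * P s + P s * deriv P s) =
      ∫ s in 0..1, 2 * (u s * g s) := by
    refine intervalIntegral.integral_congr_ae ?_
    filter_upwards [h.intervalIntegrable.ae_hasDerivAt_integral] with s hs hs01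
    have hs01' : s ∈ Set.uIcc (0 : ℝ) 1 := Set.uIoc_subset_uIcc hs01
    rw [((hs hs01' 0 (by simp)).const_add (u 0)).deriv,
      h.eq_add_integral s (by rwa [Set.uIcc_of_le zero_le_one] at hs01')]
    ring
  rw [hderiv, intervalIntegral.integral_const_mul] at hparts
  linarith

theorem continuousOn (h : IsPeriodicPrimitive u g) : ContinuousOn u (Set.Icc 0 1) := by
  have hprim := intervalIntegral.continuousOn_primitive_interval' h.intervalIntegrable
    (a := 0) (by simp)
  rw [Set.uIcc_of_le zero_le_one] at hprim
  exact (continuousOn_const.add hprim).congr h.eq_add_integral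

theorem abs_sub_le (h : IsPeriodicPrimitive u g) (hs : s ∈ Set.Icc (0 : ℝ) 1)
    (ht : t ∈ Set.Icc (0 : ℝ) 1) : |u s - u t| ≤ ∫ r in 0..1, |g r| := by
  have h0 : (0 : ℝ) ∈ Set.Icc (0 : ℝ) 1 := by simp
  have hdiff : u s - u t = ∫ r in t..s, g r := by
    rw [h.eq_add_integral s hs, h.eq_add_integral t ht, add_sub_add_left_eq_sub,
      intervalIntegral.integral_interval_sub_left (h.intervalIntegrable_of_mem h0 hs)
        (h.intervalIntegrable_of_mem h0 ht)]
  rw [hdiff, intervalIntegral.integral_of_le zero_le_one]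
  refine (intervalIntegral.norm_integral_le_integral_norm_uIoc (f := g) (μ := volume)).trans ?_
  refine setIntegral_mono_set h.intervalIntegrable.1.abs (ae_of_all _ fun _ ↦ abs_nonneg _)
    (Eventually.of_forall ?_)
  exact Set.Ioc_subset_Ioc (le_min ht.1 hs.1) (max_le ht.2 hs.2)

theorem abs_le_of_integral_eq_zero (h : IsPeriodicPrimitive u g) (hu : ∫ t in 0..1, u t = 0)
    (hs : s ∈ Set.Icc (0 : ℝ) 1) : |u s| ≤ ∫ r in 0..1, |g r| := by
  have hint : IntervalIntegrable u volume 0 1 :=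
    h.continuousOn.intervalIntegrable_of_Icc zero_le_one
  have hmean : u s = ∫ t in 0..1, (u s - u t) := by
    rw [intervalIntegral.integral_sub intervalIntegrable_const hint, hu]
    simp
  rw [hmean, ← Real.norm_eq_abs]
  have hbound (t : ℝ) (ht : t ∈ Set.uIoc 0 1) : ‖u s - u t‖ ≤ ∫ r in 0..1, |g r| := by
    rw [Set.uIoc_of_le zero_le_one] at ht
    exact h.abs_sub_le hs (Set.Ioc_subset_Icc_self ht)
  simpa using intervalIntegral.norm_integral_le_of_norm_le_const hbound

end IsPeriodicPrimitive

end PeriodicPrimitive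

section Evolution

theorem abs_integral_mul_le_sqrt_mul_sqrt {Ω : Type*} [MeasurableSpace Ω] {ν : Measure Ω}
    {u v : Ω → ℝ} (hu : MemLp u 2 ν) (hv : MemLp v 2 ν) :
    |∫ x, u x * v x ∂ν| ≤ √(∫ x, u x ^ 2 ∂ν) * √(∫ x, v x ^ 2 ∂ν) := by
  have hholder := integral_mul_norm_le_Lp_mul_Lq (μ := ν) (f := u) (g := v) (p := 2) (q := 2)
    (by rw [Real.holderConjugate_iff]; norm_num) (by simpa using hu) (by simpa using hv)
  calc |∫ x, u x * v x ∂ν| ≤ ∫ x, ‖u x‖ * ‖v x‖ ∂ν := by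
        simpa only [norm_mul, Real.norm_eq_abs] using
          norm_integral_le_integral_norm (μ := ν) fun x ↦ u x * v x
    _ ≤ _ := hholder
    _ = √(∫ x, u x ^ 2 ∂ν) * √(∫ x, v x ^ 2 ∂ν) := by simp [Real.sqrt_eq_rpow]

theorem integral_abs_le_sqrt_integral_sq {Ω : Type*} [MeasurableSpace Ω] {ν : Measure Ω}
    [IsProbabilityMeasure ν] {u : Ω → ℝ} (hu : MemLp u 2 ν) :
    ∫ x, |u x| ∂ν ≤ √(∫ x, u x ^ 2 ∂ν) := by
  have h := abs_integral_mul_le_sqrt_mul_sqrt hu.abs (memLp_const (1 : ℝ))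
  simp only [Pi.abs_apply, mul_one, sq_abs, one_pow, integral_const, probReal_univ, smul_eq_mul,
    Real.sqrt_one] at h
  exact (le_abs_self _).trans h

variable {X : Type*} [MeasurableSpace X] {m : Measure X} {b f : X × ℝ → ℝ}

theorem integral_mul_eq_zero_of_isPeriodicPrimitive [SFinite m]
    (hbf : Integrable (fun p ↦ b p * f p) (m.prod unitPeriod))
    (hode : ∀ᵐ x ∂m, IsPeriodicPrimitive (fun s ↦ b (x, s)) fun s ↦ f (x, s)) :
    ∫ p, b p * f p ∂m.prod unitPeriod = 0 := by
  rw [integral_prod _ hbf]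
  refine integral_eq_zero_of_ae ?_
  filter_upwards [hode] with x hx
  rw [Pi.zero_apply, ← hx.integral_mul_eq_zero, intervalIntegral.integral_of_le zero_le_one]

theorem isPeriodicPrimitive_integral [SFinite m]
    (hb : Integrable b (m.prod unitPeriod)) (hf : Integrable f (m.prod unitPeriod))
    (hode : ∀ᵐ x ∂m, IsPeriodicPrimitive (fun s ↦ b (x, s)) fun s ↦ f (x, s)) :
    IsPeriodicPrimitive (fun s ↦ ∫ x, b (x, s) ∂m) fun s ↦ ∫ x, f (x, s) ∂m := by
  have hf_le (s : ℝ) (hs : s ∈ Set.Icc (0 : ℝ) 1) :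
      Integrable f (m.prod (volume.restrict (Set.Ioc 0 s))) :=
    hf.mono_measure (Measure.prod_mono le_rfl
      (Measure.restrict_mono (Set.Ioc_subset_Ioc_right hs.2) le_rfl))
  have hode_at (s : ℝ) (hs : s ∈ Set.Icc (0 : ℝ) 1) :
      (fun x ↦ b (x, s)) =ᵐ[m] fun x ↦ b (x, 0) + ∫ t in Set.Ioc 0 s, f (x, t) := by
    filter_upwards [hode] with x hx
    simpa only [intervalIntegral.integral_of_le hs.1] using hx.eq_add_integral s hs
  have hb0 : Integrable (fun x ↦ b (x, 0)) m := by
    obtain ⟨s, hbs, hs⟩ := (hb.prod_left_ae.and (ae_restrict_mem measurableSet_Ioc)).exists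
    have hs' := Set.Ioc_subset_Icc_self hs
    refine (hbs.sub (hf_le s hs').integral_prod_left).congr ?_
    filter_upwards [hode_at s hs'] with x hx
    simp [hx]
  refine ⟨?_, fun s hs ↦ ?_, ?_⟩
  · rw [intervalIntegrable_iff_integrableOn_Ioc_of_le zero_le_one]
    exact hf.integral_prod_right
  · rw [integral_congr_ae (hode_at s hs), integral_add hb0 (hf_le s hs).integral_prod_left,
      integral_integral_swap (f := fun x t ↦ f (x, t)) (hf_le s hs),
      intervalIntegral.integral_of_le hs.1]
  · apply integral_congr_ae
    filter_upwards [hode] with x hx using hx.apply_one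

theorem abs_integral_le_integral_abs_of_isPeriodicPrimitive [SFinite m]
    (hb : Integrable b (m.prod unitPeriod)) (hf : Integrable f (m.prod unitPeriod))
    (hode : ∀ᵐ x ∂m, IsPeriodicPrimitive (fun s ↦ b (x, s)) fun s ↦ f (x, s))
    (hb0 : ∫ p, b p ∂m.prod unitPeriod = 0) {s : ℝ} (hs : s ∈ Set.Icc (0 : ℝ) 1) :
    |∫ x, b (x, s) ∂m| ≤ ∫ t in 0..1, |∫ x, f (x, t) ∂m| := by
  refine (isPeriodicPrimitive_integral hb hf hode).abs_le_of_integral_eq_zero ?_ hs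
  rwa [intervalIntegral.integral_of_le zero_le_one, ← integral_prod_symm _ hb]

theorem abs_integral_le_sqrt_of_isPeriodicPrimitive [IsProbabilityMeasure m] {F θ : X × ℝ → ℝ}
    (hb : Integrable b (m.prod unitPeriod)) (hθ : MemLp θ 2 (m.prod unitPeriod))
    (hF : Integrable F (m.prod unitPeriod))
    (hode : ∀ᵐ x ∂m, IsPeriodicPrimitive (fun s ↦ b (x, s)) fun s ↦ F (x, s) + θ (x, s))
    (hFmean : ∀ᵐ s ∂unitPeriod, ∫ x, F (x, s) ∂m = 0)
    (hb0 : ∫ p, b p ∂m.prod unitPeriod = 0) {s : ℝ} (hs : s ∈ Set.Icc (0 : ℝ) 1) :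
    |∫ x, b (x, s) ∂m| ≤ √(∫ p, θ p ^ 2 ∂m.prod unitPeriod) := by
  have hθi := hθ.integrable one_le_two
  calc |∫ x, b (x, s) ∂m| ≤ ∫ t in 0..1, |∫ x, (F (x, t) + θ (x, t)) ∂m| :=
        abs_integral_le_integral_abs_of_isPeriodicPrimitive (f := fun p ↦ F p + θ p) hb
          (hF.add hθi) hode hb0 hs
    _ = ∫ t, |∫ x, (F (x, t) + θ (x, t)) ∂m| ∂unitPeriod :=
        intervalIntegral.integral_of_le zero_le_one
    _ ≤ ∫ t, ∫ x, |θ (x, t)| ∂m ∂unitPeriod := by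
        refine integral_mono_ae (hF.add hθi).integral_prod_right.abs
          hθi.abs.integral_prod_right ?_
        filter_upwards [hFmean, hF.prod_left_ae, hθi.prod_left_ae] with t hFt hFint hθint
        rw [integral_add hFint hθint, hFt, zero_add]
        exact abs_integral_le_integral_abs
    _ = ∫ p, |θ p| ∂m.prod unitPeriod := (integral_prod_symm _ hθi.abs).symm
    _ ≤ √(∫ p, θ p ^ 2 ∂m.prod unitPeriod) := integral_abs_le_sqrt_integral_sq hθ

theorem neg_integral_mul_le_of_isPeriodicPrimitive [SFinite m] {F θ : X × ℝ → ℝ}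
    (hb : MemLp b 2 (m.prod unitPeriod)) (hθ : MemLp θ 2 (m.prod unitPeriod))
    (hbF : Integrable (fun p ↦ b p * F p) (m.prod unitPeriod))
    (hode : ∀ᵐ x ∂m, IsPeriodicPrimitive (fun s ↦ b (x, s)) fun s ↦ F (x, s) + θ (x, s)) :
    -∫ p, b p * F p ∂m.prod unitPeriod ≤
      √(∫ p, b p ^ 2 ∂m.prod unitPeriod) * √(∫ p, θ p ^ 2 ∂m.prod unitPeriod) := by
  have hbθ : Integrable (fun p ↦ b p * θ p) (m.prod unitPeriod) := hb.integrable_mul hθ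
  have hbalance : ∫ p, b p * F p ∂m.prod unitPeriod + ∫ p, b p * θ p ∂m.prod unitPeriod = 0 := by
    rw [← integral_add hbF hbθ]
    simp only [← mul_add]
    exact integral_mul_eq_zero_of_isPeriodicPrimitive (f := fun p ↦ F p + θ p)
      ((hbF.add hbθ).congr (ae_of_all _ fun p ↦ (mul_add _ _ _).symm)) hode
  rw [neg_eq_of_add_eq_zero_right hbalance]
  exact (le_abs_self _).trans (abs_integral_mul_le_sqrt_mul_sqrt hb hθ)

/-- With `x` and `y` the norms of `b` and `θ`, integrating
`∫ b² = Var b + (∫ b)²` over time gives `x² ≤ C x y + y²`. -/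
theorem sqrt_integral_sq_le_of_variance_le [IsProbabilityMeasure m] {F θ : X × ℝ → ℝ} {C : ℝ}
    (hC : 0 ≤ C) (hb : MemLp b 2 (m.prod unitPeriod)) (hθ : MemLp θ 2 (m.prod unitPeriod))
    (hF : Integrable F (m.prod unitPeriod))
    (hbF : Integrable (fun p ↦ b p * F p) (m.prod unitPeriod))
    (hode : ∀ᵐ x ∂m, IsPeriodicPrimitive (fun s ↦ b (x, s)) fun s ↦ F (x, s) + θ (x, s))
    (hFmean : ∀ᵐ s ∂unitPeriod, ∫ x, F (x, s) ∂m = 0)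
    (hvar : ∀ᵐ s ∂unitPeriod,
      Var[fun x ↦ b (x, s); m] ≤ C * -∫ x, b (x, s) * F (x, s) ∂m)
    (hb0 : ∫ p, b p ∂m.prod unitPeriod = 0) :
    √(∫ p, b p ^ 2 ∂m.prod unitPeriod) ≤ (C + 1) * √(∫ p, θ p ^ 2 ∂m.prod unitPeriod) := by
  have hbi := hb.integrable one_le_two
  set x := √(∫ p, b p ^ 2 ∂m.prod unitPeriod)
  set y := √(∫ p, θ p ^ 2 ∂m.prod unitPeriod)
  have hslice : ∀ᵐ s ∂unitPeriod,
      ∫ x, b (x, s) ^ 2 ∂m ≤ C * -∫ x, b (x, s) * F (x, s) ∂m + y ^ 2 := by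
    filter_upwards [hvar, ae_restrict_mem measurableSet_Ioc, hb.integrable_sq.prod_left_ae,
      hbi.prod_left_ae] with s hvars hs hsq hint
    have hmean := abs_integral_le_sqrt_of_isPeriodicPrimitive hbi hθ hF hode hFmean hb0
      (Set.Ioc_subset_Icc_self hs)
    rw [variance_eq_sub ((memLp_two_iff_integrable_sq hint.1).2 hsq)] at hvars
    have hmean_sq : (∫ x, b (x, s) ∂m) ^ 2 ≤ y ^ 2 :=
      sq_le_sq' (abs_le.1 hmean).1 (abs_le.1 hmean).2
    simp only [Pi.pow_apply] at hvars
    linarith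
  have hdiss : Integrable (fun s ↦ C * -∫ x, b (x, s) * F (x, s) ∂m) unitPeriod :=
    hbF.integral_prod_right.neg.const_mul C
  have hx : x ^ 2 ≤ C * (x * y) + y ^ 2 := calc
    x ^ 2 = ∫ s, ∫ x, b (x, s) ^ 2 ∂m ∂unitPeriod := by
      rw [Real.sq_sqrt (integral_nonneg fun p ↦ sq_nonneg _), integral_prod_symm _ hb.integrable_sq]
    _ ≤ ∫ s, (C * -∫ x, b (x, s) * F (x, s) ∂m + y ^ 2) ∂unitPeriod :=
      integral_mono_ae hb.integrable_sq.integral_prod_right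
        (hdiss.add (integrable_const _)) hslice
    _ = C * -∫ p, b p * F p ∂m.prod unitPeriod + y ^ 2 := by
      rw [integral_add hdiss (integrable_const _), integral_const_mul, integral_neg,
        integral_prod_symm _ hbF]
      simp
    _ ≤ C * (x * y) + y ^ 2 := by
      gcongr
      exact neg_integral_mul_le_of_isPeriodicPrimitive hb hθ hbF hode
  have hx0 : 0 ≤ x := Real.sqrt_nonneg _
  have hy0 : 0 ≤ y := Real.sqrt_nonneg _
  by_contra! hlt
  nlinarith [mul_nonneg hC hy0, hx0]

end Evolution

section JumpEvolution

variable {E T : Type*} [MeasurableSpace E] [AddCommGroup T]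

theorem jumpOp_prod_zero [AddGroup E] (α : Measure E) (φ : E →+ T) (W : E × T × ℝ → ℝ)
    (v : T × ℝ → ℝ) (x : T) (s : ℝ) :
    jumpOp α (φ.prod (0 : E →+ ℝ)) W v (x, s) =
      jumpOp α φ (fun q ↦ W (q.1, q.2, s)) (fun y ↦ v (y, s)) x := by
  simp [jumpOp, increment]

variable [MeasurableSpace T]

theorem IsJumpRate.slice [AddGroup E] {φ : E →+ T} {M : ℝ} {W : E × T × ℝ → ℝ}
    (hW : IsJumpRate (φ.prod (0 : E →+ ℝ)) M W) (s : ℝ) :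
    IsJumpRate φ M fun q ↦ W (q.1, q.2, s) where
  measurable := hW.measurable.comp (by fun_prop)
  abs_le q := hW.abs_le _
  jumpFlip_eq q := by simpa [jumpFlip] using hW.jumpFlip_eq (q.1, q.2, s)

/-- Space-time functions are acted on by the jumps `φ.prod 0`, which leave the time unchanged. -/
theorem exists_sqrt_integral_sq_le_of_eq_add_integral_jumpOp [NormedAddCommGroup E]
    [NormedSpace ℝ E] [FiniteDimensional ℝ E] [BorelSpace E] {ν : Measure E} [ν.IsAddHaarMeasure]
    [MeasurableAdd₂ T] {m : Measure T} [IsProbabilityMeasure m] [m.IsAddLeftInvariant]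
    {φ : E →+ T} (hφ : Measurable φ) {R : ℝ}
    (hφR : Set.SurjOn φ (Metric.closedBall 0 R) Set.univ) {f : E → ℝ≥0∞} (hf : Measurable f)
    (hf0 : ∫⁻ z, f z ∂ν ≠ 0) [IsFiniteMeasure (ν.withDensity f)]
    [(ν.withDensity f).IsNegInvariant] {μm : ℝ} (hμm : 0 < μm) :
    ∃ C : ℝ, 0 < C ∧ ∀ (M : ℝ) (W : E × T × ℝ → ℝ) (b θ : T × ℝ → ℝ),
      IsJumpRate (φ.prod (0 : E →+ ℝ)) M W → (∀ q, μm ≤ W q) → Measurable b →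
      MemLp b 2 (m.prod unitPeriod) → MemLp θ 2 (m.prod unitPeriod) →
      (∀ᵐ x ∂m, ∀ s ∈ Set.Icc (0 : ℝ) 1, b (x, s) = b (x, 0) + ∫ t in 0..s,
        (jumpOp (ν.withDensity f) (φ.prod (0 : E →+ ℝ)) W b (x, t) + θ (x, t))) →
      (∀ᵐ x ∂m, b (x, 1) = b (x, 0)) →
      ∫ p, b p ∂m.prod unitPeriod = 0 →
      √(∫ p, b p ^ 2 ∂m.prod unitPeriod) ≤ C * √(∫ p, θ p ^ 2 ∂m.prod unitPeriod) := by
  obtain ⟨C, hC⟩ := exists_variance_le_neg_integral_mul_jumpOp (m := m) hφ hφR hf hf0 hμm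
  refine ⟨C + 1, by positivity, fun M W b θ hW hWμm hb hb2 hθ2 hode hperiod hb0 ↦ ?_⟩
  have : MeasurableAdd₂ (T × ℝ) := ⟨Measurable.prodMk
    (measurable_fst.fst.add measurable_snd.fst) (measurable_fst.snd.add measurable_snd.snd)⟩
  have hψ : Measurable (φ.prod (0 : E →+ ℝ)) := hφ.prodMk measurable_const
  have hshift (z : E) : MeasurePreserving (· + φ z) m m := measurePreserving_add_right m (φ z)
  have hshift_prod (z : E) : MeasurePreserving (· + φ.prod (0 : E →+ ℝ) z)
      (m.prod unitPeriod) (m.prod unitPeriod) := by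
    simpa [Prod.map_def, Prod.add_def] using (hshift z).prod (MeasurePreserving.id unitPeriod)
  have hF : Integrable (jumpOp (ν.withDensity f) (φ.prod (0 : E →+ ℝ)) W b)
      (m.prod unitPeriod) := by
    simpa using hW.integrable_mul_jumpOp hψ hshift_prod hb2 (memLp_const (1 : ℝ))
  have hprim : ∀ᵐ x ∂m, IsPeriodicPrimitive (fun s ↦ b (x, s)) fun s ↦
      jumpOp (ν.withDensity f) (φ.prod (0 : E →+ ℝ)) W b (x, s) + θ (x, s) := by
    filter_upwards [hode, hperiod, (hF.add (hθ2.integrable one_le_two)).prod_right_ae]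
      with x hx hx1 hint
    exact ⟨(intervalIntegrable_iff_integrableOn_Ioc_of_le zero_le_one).2 hint, hx, hx1⟩
  have hslice : ∀ᵐ s ∂unitPeriod, MemLp (fun x ↦ b (x, s)) 2 m := by
    filter_upwards [hb2.integrable_sq.prod_left_ae] with s hs
    exact (memLp_two_iff_integrable_sq (hb.comp measurable_prodMk_right).aestronglyMeasurable).2 hs
  refine sqrt_integral_sq_le_of_variance_le C.2 hb2 hθ2 hF
    (hW.integrable_mul_jumpOp hψ hshift_prod hb2 hb2) hprim ?_ ?_ hb0
  · filter_upwards [hslice] with s hs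
    simp only [jumpOp_prod_zero]
    exact (hW.slice s).integral_jumpOp_eq_zero hφ hshift hs
  · filter_upwards [hslice] with s hs
    simp only [jumpOp_prod_zero]
    exact hC M _ _ (hW.slice s) (fun q ↦ hWμm _) (by fun_prop) hs

end JumpEvolution

section Torus

variable {d : ℕ}

/-- The quotient map `ℝ^d → 𝕋^d`. -/
def torusMk (d : ℕ) : (Fin d → ℝ) →+ UnitAddTorus (Fin d) :=
  (QuotientAddGroup.mk' (AddSubgroup.zmultiples (1 : ℝ))).compLeft (Fin d)

/-- The representative in the cell `[0,1)^d` of a point of `𝕋^d`. -/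
def cellRep (x : UnitAddTorus (Fin d)) : Fin d → ℝ := fun i ↦ AddCircle.equivIco 1 0 (x i)

instance isProbabilityMeasure_unitAddTorus :
    IsProbabilityMeasure (volume : Measure (UnitAddTorus (Fin d))) :=
  ⟨by simp [volume_pi, Measure.pi_univ]⟩

theorem measurable_torusMk : Measurable (torusMk d) :=
  measurable_pi_lambda _ fun i ↦ AddCircle.measurable_mk'.comp (measurable_pi_apply i)

theorem measurable_coe_equivIco :
    Measurable fun x : UnitAddCircle ↦ (AddCircle.equivIco 1 0 x : ℝ) :=
  measurable_subtype_coe.comp (AddCircle.measurableEquivIco (1 : ℝ) 0).measurable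

theorem measurePreserving_coe_equivIco :
    MeasurePreserving (fun x : UnitAddCircle ↦ (AddCircle.equivIco 1 0 x : ℝ)) volume
      (volume.restrict (Set.Ico 0 1)) := by
  refine ⟨measurable_coe_equivIco, ?_⟩
  have hmk := UnitAddCircle.measurePreserving_mk 0
  rw [zero_add, ← restrict_Ico_eq_restrict_Ioc] at hmk
  rw [← hmk.map_eq, Measure.map_map measurable_coe_equivIco hmk.measurable]
  refine (Measure.map_congr ?_).trans Measure.map_id
  filter_upwards [ae_restrict_mem measurableSet_Ico] with x hx
  simp [AddCircle.coe_equivIco_mk_apply, Int.fract_eq_self.2 hx]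

theorem measurePreserving_cellRep :
    MeasurePreserving (cellRep (d := d)) volume (volume.restrict (cube d)) := by
  have h := measurePreserving_pi (fun _ : Fin d ↦ (volume : Measure UnitAddCircle)) _
    fun _ ↦ measurePreserving_coe_equivIco
  rwa [← Measure.restrict_pi_pi] at h

theorem measurePreserving_cellRep_prod :
    MeasurePreserving (fun p : UnitAddTorus (Fin d) × ℝ ↦ (cellRep p.1, p.2))
      (volume.prod unitPeriod) (volume.restrict (cube d ×ˢ Set.Ioo (0 : ℝ) 1)) := by
  rw [Measure.volume_eq_prod, ← Measure.prod_restrict, restrict_Ioo_eq_restrict_Ioc]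
  exact measurePreserving_cellRep.prod (MeasurePreserving.id unitPeriod)

theorem setIntegral_cube_prod_Ioo {f : (Fin d → ℝ) × ℝ → ℝ} (hf : Measurable f) :
    ∫ p in cube d ×ˢ Set.Ioo (0 : ℝ) 1, f p =
      ∫ p, f (cellRep p.1, p.2) ∂(volume : Measure (UnitAddTorus (Fin d))).prod unitPeriod := by
  rw [← measurePreserving_cellRep_prod.map_eq,
    integral_map measurePreserving_cellRep_prod.aemeasurable hf.aestronglyMeasurable]

theorem memLp_comp_cellRep {f : (Fin d → ℝ) × ℝ → ℝ} (hf : Measurable f)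
    (hf2 : IntegrableOn (fun p ↦ f p ^ 2) (cube d ×ˢ Set.Ioo (0 : ℝ) 1)) :
    MemLp (fun p : UnitAddTorus (Fin d) × ℝ ↦ f (cellRep p.1, p.2)) 2 (volume.prod unitPeriod) :=
  ((memLp_two_iff_integrable_sq hf.aestronglyMeasurable).2 hf2).comp_measurePreserving
    measurePreserving_cellRep_prod

theorem torusMk_cellRep (x : UnitAddTorus (Fin d)) : torusMk d (cellRep x) = x :=
  funext fun _ ↦ AddCircle.coe_equivIco

theorem surjOn_torusMk_closedBall :
    Set.SurjOn (torusMk d) (Metric.closedBall 0 1) Set.univ := by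
  refine fun x _ ↦ ⟨cellRep x, ?_, torusMk_cellRep x⟩
  rw [mem_closedBall_zero_iff, pi_norm_le_iff_of_nonneg zero_le_one]
  intro i
  have hi : cellRep x i ∈ Set.Ico (0 : ℝ) (0 + 1) := (AddCircle.equivIco 1 0 (x i)).2
  rw [Real.norm_of_nonneg hi.1]
  linarith [hi.2]

theorem exists_add_cellRep_torusMk (y : Fin d → ℝ) :
    ∃ k : Fin d → ℤ, (cellRep (torusMk d y) + fun i ↦ (k i : ℝ)) = y := by
  refine ⟨fun i ↦ ⌊y i⌋, funext fun i ↦ ?_⟩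
  have hi : cellRep (torusMk d y) i = Int.fract (y i) :=
    (AddCircle.coe_equivIco_mk_apply (1 : ℝ) (y i)).trans (by simp)
  rw [Pi.add_apply, hi, Int.fract_add_floor]

theorem apply_cellRep_add_torusMk {Y : Type*} {F : (Fin d → ℝ) → Y}
    (hF : ∀ y, ∀ k : Fin d → ℤ, F (y + fun i ↦ (k i : ℝ)) = F y) (x : UnitAddTorus (Fin d))
    (z : Fin d → ℝ) : F (cellRep (x + torusMk d z)) = F (cellRep x + z) := by
  obtain ⟨k, hk⟩ := exists_add_cellRep_torusMk (cellRep x + z)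
  rw [map_add, torusMk_cellRep] at hk
  rw [← hF _ k, hk]

/-- The rate on `𝕋^d × ℝ` of the jumps by `z ∈ ℝ^d`, read off from `μ` on the cell. -/
def cellRate (μ : (Fin d → ℝ) → (Fin d → ℝ) → ℝ → ℝ)
    (q : (Fin d → ℝ) × UnitAddTorus (Fin d) × ℝ) : ℝ :=
  μ (cellRep q.2.1) (cellRep q.2.1 + q.1) q.2.2

theorem isJumpRate_cellRate {μ : (Fin d → ℝ) → (Fin d → ℝ) → ℝ → ℝ} {M : ℝ}
    (hμ : Measurable fun p : (Fin d → ℝ) × (Fin d → ℝ) × ℝ ↦ μ p.1 p.2.1 p.2.2)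
    (hper : ∀ ξ η s, ∀ k : Fin d → ℤ,
      μ (ξ + fun i ↦ (k i : ℝ)) (η + fun i ↦ (k i : ℝ)) s = μ ξ η s)
    (hsymm : ∀ ξ η s, μ ξ η s = μ η ξ s) (hM : ∀ ξ η s, |μ ξ η s| ≤ M) :
    IsJumpRate ((torusMk d).prod (0 : (Fin d → ℝ) →+ ℝ)) M (cellRate μ) where
  measurable := by
    have hrep : Measurable fun q : (Fin d → ℝ) × UnitAddTorus (Fin d) × ℝ ↦ cellRep q.2.1 :=
      measurePreserving_cellRep.measurable.comp measurable_snd.fst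
    exact hμ.comp (hrep.prodMk ((hrep.add measurable_fst).prodMk measurable_snd.snd))
  abs_le q := hM _ _ _
  jumpFlip_eq := by
    rintro ⟨z, x, s⟩
    have h := apply_cellRep_add_torusMk (F := fun y ↦ μ y (y + -z) s)
      (fun y k ↦ by rw [add_right_comm, hper]) x z
    simpa [cellRate, jumpFlip, hsymm (cellRep x + z)] using h

theorem jumpOp_cellRate {a : (Fin d → ℝ) → ℝ} (ha : Measurable a) (ha0 : ∀ z, 0 ≤ a z)
    (hasymm : ∀ z, a (-z) = a z) (μ : (Fin d → ℝ) → (Fin d → ℝ) → ℝ → ℝ)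
    {β : (Fin d → ℝ) → ℝ → ℝ}
    (hβ : ∀ ξ s, ∀ k : Fin d → ℤ, β (ξ + fun i ↦ (k i : ℝ)) s = β ξ s)
    (x : UnitAddTorus (Fin d)) (s : ℝ) :
    jumpOp (volume.withDensity fun z ↦ ENNReal.ofReal (a z))
        ((torusMk d).prod (0 : (Fin d → ℝ) →+ ℝ)) (cellRate μ) (fun p ↦ β (cellRep p.1) p.2)
        (x, s) =
      Aop a μ s (fun η ↦ β η s) (cellRep x) := by
  rw [jumpOp, Aop, integral_withDensity_eq_integral_toReal_smul ha.ennreal_ofReal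
    (ae_of_all _ fun _ ↦ ENNReal.ofReal_lt_top),
    ← integral_add_left_eq_self
      (fun η ↦ a (cellRep x - η) * μ (cellRep x) η s * (β η s - β (cellRep x) s)) (cellRep x)]
  refine integral_congr_ae (ae_of_all _ fun z ↦ ?_)
  have h := apply_cellRep_add_torusMk (F := fun y ↦ β y s) (fun y ↦ hβ y s) x z
  simp only [increment, cellRate, AddMonoidHom.prod_apply, AddMonoidHom.zero_apply, Prod.mk_add_mk,
    add_zero, h, ENNReal.toReal_ofReal (ha0 z), sub_add_cancel_left, hasymm, smul_eq_mul, mul_assoc]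

end Torus

theorem stmt11_general {d : ℕ} (a : (Fin d → ℝ) → ℝ) (μm : ℝ) (hameas : Measurable a)
    (hanonneg : ∀ z, 0 ≤ a z) (haint : Integrable a) (hapos : 0 < ∫ z, a z)
    (hasymm : ∀ z, a (-z) = a z) (hμm : 0 < μm) :
    ∃ C : ℝ, 0 < C ∧
      ∀ μ : (Fin d → ℝ) → (Fin d → ℝ) → ℝ → ℝ,
        (Measurable fun p : (Fin d → ℝ) × (Fin d → ℝ) × ℝ => μ p.1 p.2.1 p.2.2) →
        (∀ ξ η s, ∀ k : Fin d → ℤ,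
          μ (ξ + fun i => (k i : ℝ)) (η + fun i => (k i : ℝ)) s = μ ξ η s) →
        (∀ ξ η s, μ ξ η s = μ η ξ s) →
        (∀ ξ η s, μm ≤ μ ξ η s) → (∃ M, ∀ ξ η s, μ ξ η s ≤ M) →
        ∀ θ : (Fin d → ℝ) → ℝ → ℝ,
          (Measurable fun p : (Fin d → ℝ) × ℝ => θ p.1 p.2) →
          IntegrableOn (fun p : (Fin d → ℝ) × ℝ => (θ p.1 p.2) ^ 2)
            (cube d ×ˢ Set.Ioo (0 : ℝ) 1) →
          ∀ β, IsCellSol a μ θ β →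
            (∫ p in cube d ×ˢ Set.Ioo (0 : ℝ) 1, β (Prod.fst p) (Prod.snd p)) = 0 →
            √(∫ p in cube d ×ˢ Set.Ioo (0 : ℝ) 1, (β (Prod.fst p) (Prod.snd p)) ^ 2) ≤
              C * √(∫ p in cube d ×ˢ Set.Ioo (0 : ℝ) 1, (θ (Prod.fst p) (Prod.snd p)) ^ 2) := by
  have : IsFiniteMeasure (volume.withDensity fun z ↦ ENNReal.ofReal (a z)) :=
    isFiniteMeasure_withDensity_ofReal haint.2
  have : (volume.withDensity fun z ↦ ENNReal.ofReal (a z)).IsNegInvariant :=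
    isNegInvariant_withDensity fun z ↦ by rw [hasymm]
  have hmass : ∫⁻ z, ENNReal.ofReal (a z) ≠ 0 := by
    rw [← ofReal_integral_eq_lintegral_ofReal haint (ae_of_all _ hanonneg)]
    exact (ENNReal.ofReal_pos.2 hapos).ne'
  obtain ⟨C, hC, hbound⟩ := exists_sqrt_integral_sq_le_of_eq_add_integral_jumpOp
    (m := (volume : Measure (UnitAddTorus (Fin d)))) measurable_torusMk surjOn_torusMk_closedBall
    hameas.ennreal_ofReal hmass hμm
  refine ⟨C, hC, ?_⟩
  rintro μ hμ hμper hμsymm hμlo ⟨M, hM⟩ θ hθ hθ2 β ⟨hβ, hβper, hβtime, hβ2, hode⟩ hβ0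
  have hrate := isJumpRate_cellRate hμ hμper hμsymm fun ξ η s ↦
    (abs_of_pos (hμm.trans_le (hμlo ξ η s))).trans_le (hM ξ η s)
  rw [setIntegral_cube_prod_Ioo hβ] at hβ0
  rw [setIntegral_cube_prod_Ioo (hβ.pow_const 2), setIntegral_cube_prod_Ioo (hθ.pow_const 2)]
  refine hbound M (cellRate μ) _ _ hrate (fun q ↦ hμlo _ _ _)
    (hβ.comp measurePreserving_cellRep_prod.measurable) (memLp_comp_cellRep hβ hβ2)
    (memLp_comp_cellRep hθ hθ2) ?_ (ae_of_all _ fun x ↦ ?_) hβ0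
  · filter_upwards [measurePreserving_cellRep.quasiMeasurePreserving.ae (ae_restrict_of_ae hode)]
      with x hx
    simpa only [Function.comp_apply, jumpOp_cellRate hameas hanonneg hasymm μ hβper] using hx
  · simpa using hβtime (cellRep x) 0

/-- There is `C₃ > 0`, depending only on `d`, `a`, `μ⁻`, `μ⁺`, such that every
time-periodic solution `β` of `∂_s β - A(s)β = θ` with zero mean over `𝕋^{d+1}`
satisfies `‖β‖_{L²(𝕋^{d+1})} ≤ C₃ ‖θ‖_{L²(𝕋^{d+1})}`. -/
theorem stmt11 {d : ℕ} (hd : 1 ≤ d)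
    (a : (Fin d → ℝ) → ℝ) (μm μp : ℝ)
    (hameas : Measurable a) (hanonneg : ∀ z, 0 ≤ a z)
    (haint : Integrable a) (hamass : ∫ z, a z = 1)
    (hamom : Integrable (fun z => ‖z‖ ^ 2 * a z))
    (hasymm : ∀ z, a (-z) = a z)
    (hμm : 0 < μm) :
    ∃ C : ℝ, 0 < C ∧
      ∀ μ : (Fin d → ℝ) → (Fin d → ℝ) → ℝ → ℝ,
        (Measurable fun p : (Fin d → ℝ) × (Fin d → ℝ) × ℝ => μ p.1 p.2.1 p.2.2) →
        (∀ ξ η s, ∀ k : Fin d → ℤ, μ (ξ + fun i => (k i : ℝ)) η s = μ ξ η s) →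
        (∀ ξ η s, ∀ k : Fin d → ℤ, μ ξ (η + fun i => (k i : ℝ)) s = μ ξ η s) →
        (∀ ξ η s, μ ξ η (s + 1) = μ ξ η s) →
        (∀ ξ η s, μ ξ η s = μ η ξ s) →
        (∀ ξ η s, μm ≤ μ ξ η s) → (∀ ξ η s, μ ξ η s ≤ μp) →
        ∀ θ : (Fin d → ℝ) → ℝ → ℝ,
          (Measurable fun p : (Fin d → ℝ) × ℝ => θ p.1 p.2) →
          (∀ ξ s, ∀ k : Fin d → ℤ, θ (ξ + fun i => (k i : ℝ)) s = θ ξ s) →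
          (∀ ξ s, θ ξ (s + 1) = θ ξ s) →
          IntegrableOn (fun p : (Fin d → ℝ) × ℝ => (θ p.1 p.2) ^ 2)
            (cube d ×ˢ Set.Ioo (0 : ℝ) 1) →
          (∫ p in cube d ×ˢ Set.Ioo (0 : ℝ) 1, θ (Prod.fst p) (Prod.snd p)) = 0 →
          ∀ β, IsCellSol a μ θ β →
            (∫ p in cube d ×ˢ Set.Ioo (0 : ℝ) 1, β (Prod.fst p) (Prod.snd p)) = 0 →
            Real.sqrt (∫ p in cube d ×ˢ Set.Ioo (0 : ℝ) 1,
                (β (Prod.fst p) (Prod.snd p)) ^ 2) ≤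
              C * Real.sqrt (∫ p in cube d ×ˢ Set.Ioo (0 : ℝ) 1,
                (θ (Prod.fst p) (Prod.snd p)) ^ 2) := by
  obtain ⟨C, hC, hbound⟩ := stmt11_general a μm hameas hanonneg haint (hamass ▸ one_pos) hasymm hμm
  exact ⟨C, hC, fun μ hμ hμper hμper' _ hμsymm hμlo hμhi θ hθ _ _ hθ2 _ β hβ hβ0 ↦
    hbound μ hμ (fun ξ η s k ↦ by rw [hμper, hμper'])
      hμsymm hμlo ⟨μp, hμhi⟩ θ hθ hθ2 β hβ hβ0⟩
end
end

section
/- The integral operator K from L²(𝕋^{d+1}) to L²(𝕋^d) defined by (KΨ)(ξ) = ∫₀¹ ∫_{ℝ^d} a(ξ−η) μ(ξ,η,s) exp(∫₀^s (G(ξ,τ) − G(η,τ)) dτ) Ψ(η,s) dη ds is a compact operator, and its operator norm does not exceed μ⁺ e^{μ⁺}. -/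
open MeasureTheory

noncomputable section

/-- The periodic reduction of a point of `ℝ^d` to the cell `[0,1)^d`. -/
def fract {d : ℕ} (x : Fin d → ℝ) : Fin d → ℝ := fun i => Int.fract (x i)

/-- `G(ξ,s) = ∫_{ℝ^d} a(ξ-η) μ(ξ,η,s) dη`. -/
def Gfun {d : ℕ} (a : (Fin d → ℝ) → ℝ) (μ : (Fin d → ℝ) → (Fin d → ℝ) → ℝ → ℝ)
    (ξ : Fin d → ℝ) (s : ℝ) : ℝ :=
  ∫ η, a (ξ - η) * μ ξ η s

/-!
Folding `ℝ^d` into the cell `[0,1)^d` turns `∫ a(ξ-η) h(η) dη`, for `ℤ^d`-periodic `h`, into an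
integral over the cell against the periodization `∑ₖ a(ξ-η+k)`. The kernel of `K` on the cell is
therefore dominated by `C α(ξ-η)` with `α` periodic of integral `∫ a`, and since translations
preserve integrals of periodic functions over the cell, Schur's test bounds the norm by `C ∫ a`.
The kernel need not be square integrable, but its truncation to the set where it is at most `N` is
bounded, hence Hilbert-Schmidt and compact. The remainder has Schur constant at most
`∫_{C α > N} C α`, which tends to `0` as `N → ∞` by integrability alone, so `K` is a norm limit of
compact operators.
-/

open Filter Set Topology
open scoped ENNReal NNReal InnerProductSpace

section IntegralOperator

variable {X Y 𝕜 : Type*} [MeasurableSpace X] [MeasurableSpace Y] [RCLike 𝕜]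
  {m : Measure X} {n : Measure Y} {k k' : X × Y → 𝕜} {C : ℝ≥0} {T T' : Lp 𝕜 2 n →L[𝕜] Lp 𝕜 2 m}

/-- Boundedness of the positive integral operator with kernel `‖k‖` from `L²(n)` to `L²(m)`, with
constant `C`, tested on nonnegative functions so that no integrability has to be assumed. -/
def KernelBound (m : Measure X) (n : Measure Y) (k : X × Y → 𝕜) (C : ℝ≥0) : Prop :=
  ∀ g : Y → ℝ≥0∞, AEMeasurable g n →
    ∫⁻ x, (∫⁻ y, ‖k (x, y)‖ₑ * g y ∂n) ^ 2 ∂m ≤ (C : ℝ≥0∞) ^ 2 * ∫⁻ y, g y ^ 2 ∂n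

/-- `T` is the integral operator with kernel `k`. Absolute convergence of the integrals is part of
the notion, which makes it additive in `(T, k)`. -/
def HasKernel (T : Lp 𝕜 2 n →L[𝕜] Lp 𝕜 2 m) (k : X × Y → 𝕜) : Prop :=
  ∀ Ψ : Lp 𝕜 2 n, ∀ᵐ x ∂m,
    Integrable (fun y => k (x, y) * Ψ y) n ∧ T Ψ x = ∫ y, k (x, y) * Ψ y ∂n

lemma eLpNorm_two_sq {E : Type*} [ENorm E] (f : X → E) :
    eLpNorm f 2 m ^ 2 = ∫⁻ x, ‖f x‖ₑ ^ 2 ∂m := by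
  simpa using eLpNorm_nnreal_pow_eq_lintegral (f := f) (μ := m) (p := 2) two_ne_zero

lemma sq_lintegral_mul_le {f g : X → ℝ≥0∞} (hf : AEMeasurable f m) (hg : AEMeasurable g m) :
    (∫⁻ x, f x * g x ∂m) ^ 2 ≤ (∫⁻ x, f x ^ 2 ∂m) * ∫⁻ x, g x ^ 2 ∂m := by
  have sq_rpow_half (t : ℝ≥0∞) : (t ^ (1 / 2 : ℝ)) ^ 2 = t := by
    rw [← ENNReal.rpow_natCast, ← ENNReal.rpow_mul]
    norm_num
  have holder := ENNReal.lintegral_mul_le_Lp_mul_Lq m Real.HolderConjugate.two_two hf hg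
  refine (pow_le_pow_left' holder 2).trans_eq ?_
  simp only [mul_pow, sq_rpow_half, ENNReal.rpow_two]

namespace HasKernel

lemma congr_ae [SFinite n] (hT : HasKernel T k) (h : k =ᵐ[m.prod n] k') :
    HasKernel T k' := by
  intro Ψ
  filter_upwards [hT Ψ, Measure.ae_ae_of_ae_prod h] with x ⟨hint, hval⟩ hx
  have heq : (fun y => k (x, y) * Ψ y) =ᵐ[n] fun y => k' (x, y) * Ψ y :=
    hx.mono fun y hy => by simp only [hy]
  exact ⟨hint.congr heq, hval.trans (integral_congr_ae heq)⟩

lemma zero : HasKernel (0 : Lp 𝕜 2 n →L[𝕜] Lp 𝕜 2 m) 0 := by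
  intro Ψ
  filter_upwards [Lp.coeFn_zero 𝕜 2 m] with x hx
  simpa using hx

lemma add (hT : HasKernel T k) (hT' : HasKernel T' k') : HasKernel (T + T') (k + k') := by
  intro Ψ
  filter_upwards [hT Ψ, hT' Ψ, Lp.coeFn_add (T Ψ) (T' Ψ)] with x ⟨hint, hval⟩ ⟨hint', hval'⟩ hx
  simp only [Pi.add_apply, add_mul]
  exact ⟨hint.add hint', by
    rw [add_apply, hx, Pi.add_apply, hval, hval', integral_add hint hint']⟩

lemma const_smul (hT : HasKernel T k) (c : 𝕜) : HasKernel (c • T) (c • k) := by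
  intro Ψ
  filter_upwards [hT Ψ, Lp.coeFn_smul c (T Ψ)] with x ⟨hint, hval⟩ hx
  simp only [Pi.smul_apply, smul_eq_mul, mul_assoc]
  exact ⟨hint.const_mul c, by
    rw [smul_apply, hx, Pi.smul_apply, hval, smul_eq_mul, integral_const_mul]⟩

lemma sub (hT : HasKernel T k) (hT' : HasKernel T' k') : HasKernel (T - T') (k - k') := by
  simpa [sub_eq_add_neg] using hT.add (hT'.const_smul (-1))

end HasKernel

lemma coe_mul_eLpNorm_ne_top (C : ℝ≥0) (Ψ : Lp 𝕜 2 n) : C * eLpNorm Ψ 2 n ≠ ∞ :=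
  ENNReal.mul_ne_top ENNReal.coe_ne_top (Lp.eLpNorm_ne_top Ψ)

lemma aestronglyMeasurable_kernel_mul (hk : AEStronglyMeasurable k (m.prod n)) (Ψ : Lp 𝕜 2 n) :
    AEStronglyMeasurable (fun p : X × Y => k p * Ψ p.2) (m.prod n) :=
  hk.mul (Lp.aestronglyMeasurable Ψ).comp_snd

namespace KernelBound

lemma eLpNorm_integral_le (hk : KernelBound m n k C) (Ψ : Lp 𝕜 2 n) :
    eLpNorm (fun x => ∫ y, k (x, y) * Ψ y ∂n) 2 m ≤ C * eLpNorm Ψ 2 n := by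
  refine (ENNReal.pow_le_pow_left_iff two_ne_zero).1 ?_
  calc eLpNorm (fun x => ∫ y, k (x, y) * Ψ y ∂n) 2 m ^ 2
    _ = ∫⁻ x, ‖∫ y, k (x, y) * Ψ y ∂n‖ₑ ^ 2 ∂m := eLpNorm_two_sq _
    _ ≤ ∫⁻ x, (∫⁻ y, ‖k (x, y)‖ₑ * ‖Ψ y‖ₑ ∂n) ^ 2 ∂m := by
      gcongr with x
      simpa only [enorm_mul] using enorm_integral_le_lintegral_enorm fun y => k (x, y) * Ψ y
    _ ≤ (C : ℝ≥0∞) ^ 2 * ∫⁻ y, ‖Ψ y‖ₑ ^ 2 ∂n := hk _ (Lp.aestronglyMeasurable Ψ).enorm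
    _ = (C * eLpNorm Ψ 2 n) ^ 2 := by rw [mul_pow, eLpNorm_two_sq]

section Existence

variable [SFinite n]

lemma ae_integrable (hk : KernelBound m n k C) (hkm : AEStronglyMeasurable k (m.prod n))
    (Ψ : Lp 𝕜 2 n) : ∀ᵐ x ∂m, Integrable (fun y => k (x, y) * Ψ y) n := by
  have hmeas := aestronglyMeasurable_kernel_mul hkm Ψ
  have hfin : ∫⁻ x, (∫⁻ y, ‖k (x, y) * Ψ y‖ₑ ∂n) ^ 2 ∂m ≠ ∞ := by
    simp only [enorm_mul]
    refine ne_top_of_le_ne_top ?_ (hk _ (Lp.aestronglyMeasurable Ψ).enorm)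
    rw [← eLpNorm_two_sq, ← mul_pow]
    exact ENNReal.pow_ne_top (coe_mul_eLpNorm_ne_top C Ψ)
  filter_upwards [ae_lt_top' (hmeas.enorm.lintegral_prod_right'.pow_const 2) hfin,
    hmeas.prodMk_left] with x hx hx_meas
  exact ⟨hx_meas, (ENNReal.pow_lt_top_iff.1 hx).resolve_right two_ne_zero⟩

lemma memLp_integral (hk : KernelBound m n k C) (hkm : AEStronglyMeasurable k (m.prod n))
    (Ψ : Lp 𝕜 2 n) : MemLp (fun x => ∫ y, k (x, y) * Ψ y ∂n) 2 m :=
  ⟨(aestronglyMeasurable_kernel_mul hkm Ψ).integral_prod_right',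
    (hk.eLpNorm_integral_le Ψ).trans_lt (coe_mul_eLpNorm_ne_top C Ψ).lt_top⟩

theorem exists_hasKernel (hk : KernelBound m n k C) (hkm : AEStronglyMeasurable k (m.prod n)) :
    ∃ T : Lp 𝕜 2 n →L[𝕜] Lp 𝕜 2 m, HasKernel T k := by
  let L : Lp 𝕜 2 n →ₗ[𝕜] Lp 𝕜 2 m :=
    { toFun Ψ := (hk.memLp_integral hkm Ψ).toLp
      map_add' Ψ Φ := by
        rw [← MemLp.toLp_add]
        refine MemLp.toLp_congr _ _ ?_
        filter_upwards [hk.ae_integrable hkm Ψ, hk.ae_integrable hkm Φ] with x hΨ hΦ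
        rw [Pi.add_apply, ← integral_add hΨ hΦ]
        refine integral_congr_ae ((Lp.coeFn_add Ψ Φ).mono fun y hy => ?_)
        simp only [hy, Pi.add_apply, mul_add]
      map_smul' c Ψ := by
        rw [RingHom.id_apply, ← MemLp.toLp_const_smul]
        refine MemLp.toLp_congr _ _ (.of_forall fun x => ?_)
        rw [Pi.smul_apply, ← integral_smul]
        refine integral_congr_ae ((Lp.coeFn_smul c Ψ).mono fun y hy => ?_)
        simp only [hy, Pi.smul_apply, mul_smul_comm] }
  have hbound (Ψ : Lp 𝕜 2 n) : ‖L Ψ‖ ≤ C * ‖Ψ‖ :=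
    calc ‖L Ψ‖
      _ = (eLpNorm (fun x => ∫ y, k (x, y) * Ψ y ∂n) 2 m).toReal :=
        Lp.norm_toLp _ (hk.memLp_integral hkm Ψ)
      _ ≤ (C * eLpNorm Ψ 2 n).toReal :=
        ENNReal.toReal_mono (coe_mul_eLpNorm_ne_top C Ψ) (hk.eLpNorm_integral_le Ψ)
      _ = C * ‖Ψ‖ := by simp [Lp.norm_def]
  refine ⟨L.mkContinuous C hbound, fun Ψ => ?_⟩
  filter_upwards [hk.ae_integrable hkm Ψ, (hk.memLp_integral hkm Ψ).coeFn_toLp] with x hx hLx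
  exact ⟨hx, hLx⟩

end Existence

end KernelBound

namespace HasKernel

lemma opNorm_le (hT : HasKernel T k) (hk : KernelBound m n k C) : ‖T‖ ≤ C := by
  refine T.opNorm_le_bound C.2 fun Ψ => ?_
  have hTΨ : T Ψ =ᵐ[m] fun x => ∫ y, k (x, y) * Ψ y ∂n := (hT Ψ).mono fun x hx => hx.2
  have hle := hk.eLpNorm_integral_le Ψ
  rw [← eLpNorm_congr_ae hTΨ] at hle
  simpa [Lp.norm_def] using ENNReal.toReal_mono (coe_mul_eLpNorm_ne_top C Ψ) hle

theorem isCompactOperator_of_approx (hT : HasKernel T k)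
    (happrox : ∀ ε : ℝ≥0, 0 < ε → ∃ (T' : Lp 𝕜 2 n →L[𝕜] Lp 𝕜 2 m) (k' : X × Y → 𝕜),
      HasKernel T' k' ∧ IsCompactOperator T' ∧ KernelBound m n (k - k') ε) :
    IsCompactOperator T := by
  have hclosed : IsClosed {S : Lp 𝕜 2 n →L[𝕜] Lp 𝕜 2 m | IsCompactOperator S} :=
    isClosed_setOfPred_isCompactOperator
  refine hclosed.closure_subset (Metric.mem_closure_iff.2 fun ε hε => ?_)
  obtain ⟨T', k', hT', hcomp, hbound⟩ := happrox (ε / 2).toNNReal (by simpa using hε)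
  refine ⟨T', hcomp, ?_⟩
  calc dist T T' = ‖T - T'‖ := dist_eq_norm _ _
    _ ≤ (ε / 2).toNNReal := (hT.sub hT').opNorm_le hbound
    _ < ε := by rw [Real.coe_toNNReal _ (half_pos hε).le]; exact half_lt_self hε

end HasKernel

end IntegralOperator

section HilbertSchmidt

variable {X Y 𝕜 : Type*} [MeasurableSpace X] [MeasurableSpace Y] [RCLike 𝕜]
  {m : Measure X} {n : Measure Y}

lemma KernelBound.of_eLpNorm_le [SFinite n] {k : X × Y → 𝕜} {C : ℝ≥0}
    (hkm : AEStronglyMeasurable k (m.prod n)) (hC : eLpNorm k 2 (m.prod n) ≤ C) :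
    KernelBound m n k C := by
  intro g hg
  have hsq : AEMeasurable (fun p => ‖k p‖ₑ ^ 2) (m.prod n) := hkm.enorm.pow_const 2
  calc ∫⁻ x, (∫⁻ y, ‖k (x, y)‖ₑ * g y ∂n) ^ 2 ∂m
    _ ≤ ∫⁻ x, (∫⁻ y, ‖k (x, y)‖ₑ ^ 2 ∂n) * ∫⁻ y, g y ^ 2 ∂n ∂m := by
      refine lintegral_mono_ae ?_
      filter_upwards [hkm.prodMk_left] with x hx using sq_lintegral_mul_le hx.enorm hg
    _ = eLpNorm k 2 (m.prod n) ^ 2 * ∫⁻ y, g y ^ 2 ∂n := by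
      rw [lintegral_mul_const'' _ hsq.lintegral_prod_right', eLpNorm_two_sq, lintegral_prod _ hsq]
    _ ≤ (C : ℝ≥0∞) ^ 2 * ∫⁻ y, g y ^ 2 ∂n := by gcongr

lemma isCompactOperator_rankOne {E F : Type*} [NormedAddCommGroup E] [InnerProductSpace 𝕜 E]
    [NormedAddCommGroup F] [InnerProductSpace 𝕜 F] (x : E) (y : F) :
    IsCompactOperator (InnerProductSpace.rankOne 𝕜 x y) := by
  have hdual : IsCompactOperator (innerSL 𝕜 y) := isCompactOperator_of_locallyCompactSpace_dom _
  exact hdual.clm_comp (ContinuousLinearMap.toSpanSingleton 𝕜 x)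

lemma hasKernel_rankOne (f : Lp 𝕜 2 m) (g : Lp 𝕜 2 n) :
    HasKernel (InnerProductSpace.rankOne 𝕜 f g) fun p => f p.1 * starRingEnd 𝕜 (g p.2) := by
  intro Ψ
  have hint : Integrable (fun y => starRingEnd 𝕜 (g y) * Ψ y) n := by
    simpa only [RCLike.inner_apply'] using L2.integrable_inner (𝕜 := 𝕜) g Ψ
  filter_upwards [Lp.coeFn_smul ⟪g, Ψ⟫_𝕜 f] with x hx
  refine ⟨by simpa only [mul_assoc] using hint.const_mul (f x), ?_⟩
  simp only [mul_assoc]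
  rw [InnerProductSpace.rankOne_apply, hx, integral_const_mul, Pi.smul_apply, smul_eq_mul,
    mul_comm, L2.inner_def]
  simp only [RCLike.inner_apply']

theorem ae_eq_zero_of_forall_setIntegral_eq_zero_of_isPiSystem {E : Type*} [NormedAddCommGroup E]
    [NormedSpace ℝ E] [CompleteSpace E] {S : Set (Set X)} {f : X → E}
    (hgen : ‹MeasurableSpace X› = MeasurableSpace.generateFrom S) (hS : IsPiSystem S)
    (hf : Integrable f m) (huniv : ∫ x, f x ∂m = 0) (hzero : ∀ s ∈ S, ∫ x in s, f x ∂m = 0) :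
    f =ᵐ[m] 0 := by
  suffices hall : ∀ s, MeasurableSet s → ∫ x in s, f x ∂m = 0 from
    hf.ae_eq_zero_of_forall_setIntegral_eq_zero fun s hs _ => hall s hs
  intro s hs
  induction s, hs using MeasurableSpace.induction_on_inter hgen hS with
  | empty => simp
  | basic s hs => exact hzero s hs
  | compl s hs ih => rw [← huniv, ← integral_add_compl hs hf, ih, zero_add]
  | iUnion t hdisj ht ih =>
    rw [integral_iUnion ht hdisj hf.integrableOn]
    simp only [ih, tsum_zero]

section CompactKernels

variable [SFinite n]

variable (𝕜 m n) in
/-- The square-integrable kernels whose integral operator is compact. -/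
def compactKernels : Submodule 𝕜 (Lp 𝕜 2 (m.prod n)) where
  carrier := {k | ∃ T : Lp 𝕜 2 n →L[𝕜] Lp 𝕜 2 m, HasKernel T k ∧ IsCompactOperator T}
  add_mem' := by
    rintro k k' ⟨T, hT, hcomp⟩ ⟨T', hT', hcomp'⟩
    exact ⟨T + T', (hT.add hT').congr_ae (Lp.coeFn_add k k').symm, hcomp.add hcomp'⟩
  zero_mem' :=
    ⟨0, HasKernel.zero.congr_ae (Lp.coeFn_zero 𝕜 2 (m.prod n)).symm, isCompactOperator_zero⟩
  smul_mem' := by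
    rintro c k ⟨T, hT, hcomp⟩
    exact ⟨c • T, (hT.const_smul c).congr_ae (Lp.coeFn_smul c k).symm, hcomp.smul c⟩

lemma exists_hasKernel_of_Lp (k : Lp 𝕜 2 (m.prod n)) :
    ∃ T : Lp 𝕜 2 n →L[𝕜] Lp 𝕜 2 m, HasKernel T k := by
  have hk := Lp.aestronglyMeasurable k
  exact (KernelBound.of_eLpNorm_le hk
    (ENNReal.coe_toNNReal (Lp.eLpNorm_ne_top k)).ge).exists_hasKernel hk

lemma isClosed_compactKernels : IsClosed (compactKernels 𝕜 m n : Set (Lp 𝕜 2 (m.prod n))) := by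
  refine isClosed_of_closure_subset fun k hk => ?_
  obtain ⟨T, hT⟩ := exists_hasKernel_of_Lp k
  refine ⟨T, hT, hT.isCompactOperator_of_approx fun ε hε => ?_⟩
  obtain ⟨k', ⟨T', hT', hcomp⟩, hdist⟩ := Metric.mem_closure_iff.1 hk ε hε
  refine ⟨T', k', hT', hcomp, .of_eLpNorm_le
    ((Lp.aestronglyMeasurable k).sub (Lp.aestronglyMeasurable k')) ?_⟩
  rw [← Lp.edist_def]
  exact edist_le_coe.2 hdist.le

end CompactKernels

variable [IsFiniteMeasure m] [IsFiniteMeasure n]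

lemma indicatorConstLp_prod_mem_compactKernels {A : Set X} {B : Set Y} (hA : MeasurableSet A)
    (hB : MeasurableSet B) :
    indicatorConstLp 2 (hA.prod hB) (measure_ne_top (m.prod n) _) (1 : 𝕜) ∈
      compactKernels 𝕜 m n := by
  let f : Lp 𝕜 2 m := indicatorConstLp 2 hA (measure_ne_top m A) 1
  let g : Lp 𝕜 2 n := indicatorConstLp 2 hB (measure_ne_top n B) 1
  refine ⟨InnerProductSpace.rankOne 𝕜 f g, (hasKernel_rankOne f g).congr_ae ?_,
    isCompactOperator_rankOne f g⟩
  have hf : f =ᵐ[m] A.indicator fun _ => 1 := indicatorConstLp_coeFn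
  have hg : g =ᵐ[n] B.indicator fun _ => 1 := indicatorConstLp_coeFn
  filter_upwards [Measure.quasiMeasurePreserving_fst.ae hf,
    Measure.quasiMeasurePreserving_snd.ae hg,
    indicatorConstLp_coeFn (μ := m.prod n) (p := 2) (hs := hA.prod hB)
      (hμs := measure_ne_top _ _) (c := (1 : 𝕜))] with p hfp hgp hp
  rw [hfp, hgp, hp]
  by_cases h₁ : p.1 ∈ A <;> by_cases h₂ : p.2 ∈ B <;> simp [h₁, h₂]

theorem compactKernels_eq_top : compactKernels 𝕜 m n = ⊤ := by
  rw [← isClosed_compactKernels.submodule_topologicalClosure_eq,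
    Submodule.topologicalClosure_eq_top_iff, Submodule.eq_bot_iff]
  intro h hh
  have hrect {A : Set X} {B : Set Y} (hA : MeasurableSet A) (hB : MeasurableSet B) :
      ∫ p in A ×ˢ B, h p ∂m.prod n = 0 := by
    rw [← L2.inner_indicatorConstLp_one (𝕜 := 𝕜) (hA.prod hB) (measure_ne_top _ _) h]
    exact hh _ (indicatorConstLp_prod_mem_compactKernels hA hB)
  refine Lp.eq_zero_iff_ae_eq_zero.2
    (ae_eq_zero_of_forall_setIntegral_eq_zero_of_isPiSystem generateFrom_prod.symm isPiSystem_prod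
      ((Lp.memLp h).integrable one_le_two) ?_ ?_)
  · simpa using hrect MeasurableSet.univ MeasurableSet.univ
  · rintro _ ⟨A, hA, B, hB, rfl⟩
    exact hrect hA hB

theorem exists_hasKernel_isCompactOperator_of_memLp {k : X × Y → 𝕜} (hk : MemLp k 2 (m.prod n)) :
    ∃ T : Lp 𝕜 2 n →L[𝕜] Lp 𝕜 2 m, HasKernel T k ∧ IsCompactOperator T := by
  have hmem : hk.toLp ∈ compactKernels 𝕜 m n := by simp [compactKernels_eq_top]
  obtain ⟨T, hT, hcomp⟩ := hmem
  exact ⟨T, hT.congr_ae hk.coeFn_toLp, hcomp⟩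

end HilbertSchmidt

section SchurTest

variable {X Y 𝕜 : Type*} [MeasurableSpace X] [MeasurableSpace Y] [RCLike 𝕜]
  {m : Measure X} {n : Measure Y} {k : X × Y → 𝕜}

lemma sq_lintegral_mul_le_lintegral_mul_lintegral_mul_sq {w g : Y → ℝ≥0∞} (hw : AEMeasurable w n)
    (hg : AEMeasurable g n) :
    (∫⁻ y, w y * g y ∂n) ^ 2 ≤ (∫⁻ y, w y ∂n) * ∫⁻ y, w y * g y ^ 2 ∂n := by
  have hg' : AEMeasurable g (n.withDensity w) :=
    hg.mono_ac (withDensity_absolutelyContinuous n w)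
  have hcs := sq_lintegral_mul_le (m := n.withDensity w) (f := 1) aemeasurable_const hg'
  rw [lintegral_withDensity_eq_lintegral_mul₀ hw (by simpa using hg),
    lintegral_withDensity_eq_lintegral_mul₀ hw (by simp),
    lintegral_withDensity_eq_lintegral_mul₀ hw (hg.pow_const 2)] at hcs
  simpa using hcs

theorem KernelBound.of_lintegral_enorm_le [SFinite m] [SFinite n] {A B : ℝ≥0}
    (hkm : AEStronglyMeasurable k (m.prod n)) (hA : ∀ᵐ x ∂m, ∫⁻ y, ‖k (x, y)‖ₑ ∂n ≤ A)
    (hB : ∀ᵐ y ∂n, ∫⁻ x, ‖k (x, y)‖ₑ ∂m ≤ B) :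
    KernelBound m n k (NNReal.sqrt (A * B)) := by
  intro g hg
  calc ∫⁻ x, (∫⁻ y, ‖k (x, y)‖ₑ * g y ∂n) ^ 2 ∂m
    _ ≤ ∫⁻ x, A * ∫⁻ y, ‖k (x, y)‖ₑ * g y ^ 2 ∂n ∂m := by
      refine lintegral_mono_ae ?_
      filter_upwards [hA, hkm.prodMk_left] with x hx hx_meas
      exact (sq_lintegral_mul_le_lintegral_mul_lintegral_mul_sq hx_meas.enorm hg).trans
        (by gcongr)
    _ = A * ∫⁻ y, ∫⁻ x, ‖k (x, y)‖ₑ * g y ^ 2 ∂m ∂n := by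
      rw [lintegral_const_mul' _ _ ENNReal.coe_ne_top,
        lintegral_lintegral_swap (hkm.enorm.mul (hg.comp_snd.pow_const 2))]
    _ ≤ A * ∫⁻ y, B * g y ^ 2 ∂n := by
      refine mul_right_mono (lintegral_mono_ae ?_)
      filter_upwards [hB, hkm.prod_swap.prodMk_left] with y hy hy_meas
      rw [lintegral_mul_const'' (g y ^ 2) (f := fun x => ‖k (x, y)‖ₑ) hy_meas.enorm]
      exact mul_left_mono hy
    _ = (NNReal.sqrt (A * B) : ℝ≥0∞) ^ 2 * ∫⁻ y, g y ^ 2 ∂n := by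
      rw [lintegral_const_mul' _ _ ENNReal.coe_ne_top, ← mul_assoc, ← ENNReal.coe_mul,
        ← ENNReal.coe_pow, NNReal.sq_sqrt]

variable [IsFiniteMeasure m] [IsFiniteMeasure n]

theorem HasKernel.isCompactOperator_of_tails {T : Lp 𝕜 2 n →L[𝕜] Lp 𝕜 2 m} (hT : HasKernel T k)
    (hkm : Measurable k)
    (htail : ∀ ε : ℝ≥0, 0 < ε → ∃ N : ℝ≥0,
      (∀ᵐ x ∂m, ∫⁻ y, (Ioi (N : ℝ≥0∞)).indicator id ‖k (x, y)‖ₑ ∂n ≤ ε) ∧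
      ∀ᵐ y ∂n, ∫⁻ x, (Ioi (N : ℝ≥0∞)).indicator id ‖k (x, y)‖ₑ ∂m ≤ ε) :
    IsCompactOperator T := by
  refine hT.isCompactOperator_of_approx fun ε hε => ?_
  obtain ⟨N, hx, hy⟩ := htail ε hε
  let S : Set (X × Y) := {p | (N : ℝ≥0∞) < ‖k p‖ₑ}
  have hS : MeasurableSet S := measurableSet_lt measurable_const hkm.enorm
  have enorm_tail (p : X × Y) :
      ‖S.indicator k p‖ₑ = (Ioi (N : ℝ≥0∞)).indicator id ‖k p‖ₑ := by
    rw [enorm_indicator_eq_indicator_enorm]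
    rfl
  have hbdd : MemLp (Sᶜ.indicator k) 2 (m.prod n) := by
    refine .of_bound (hkm.indicator hS.compl).aestronglyMeasurable N (.of_forall fun p => ?_)
    by_cases hp : p ∈ S
    · simp [hp]
    · rw [indicator_of_mem (mem_compl hp)]
      exact enorm_le_coe.1 (not_lt.1 hp)
  obtain ⟨T', hT', hcomp⟩ := exists_hasKernel_isCompactOperator_of_memLp hbdd
  refine ⟨T', _, hT', hcomp, ?_⟩
  rw [indicator_compl, sub_sub_cancel, ← NNReal.sqrt_mul_self ε]
  exact .of_lintegral_enorm_le (hkm.indicator hS).aestronglyMeasurable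
    (by simpa only [enorm_tail] using hx) (by simpa only [enorm_tail] using hy)

end SchurTest

section Periodization

variable {G X : Type*} [AddGroup G] [AddAction G X] {b : X → ℝ≥0∞}

variable (G) in
/-- The periodization of `b` along the orbits of `G`: the `G`-invariant function obtained by summing
`b` over each orbit. -/
def periodization (b : X → ℝ≥0∞) (x : X) : ℝ≥0∞ := ∑' g : G, b (g +ᵥ x)

lemma periodization_vadd (b : X → ℝ≥0∞) (g : G) (x : X) :
    periodization G b (g +ᵥ x) = periodization G b x := by
  simpa only [periodization, vadd_vadd, Equiv.coe_addRight] using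
    (Equiv.addRight g).tsum_eq fun g' => b (g' +ᵥ x)

variable [Countable G] [MeasurableSpace X] {μ : Measure X} {F : Set X}

lemma measurable_periodization [MeasurableConstVAdd G X] (hb : Measurable b) :
    Measurable (periodization G b) :=
  .tsum fun g => hb.comp (measurable_const_vadd g)

variable [MeasurableConstVAdd G X] [VAddInvariantMeasure G X μ]

lemma setLIntegral_periodization_mul (hF : IsAddFundamentalDomain G F μ) (hb : Measurable b)
    {h : X → ℝ≥0∞} (hh : Measurable h) (h_inv : ∀ (g : G) x, h (g +ᵥ x) = h x) :
    ∫⁻ x in F, periodization G b x * h x ∂μ = ∫⁻ x, b x * h x ∂μ := by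
  have hterm (g : G) : Measurable fun x => b (g +ᵥ x) * h x :=
    (hb.comp (measurable_const_vadd g)).mul hh
  calc ∫⁻ x in F, periodization G b x * h x ∂μ
    _ = ∫⁻ x in F, ∑' g : G, b (g +ᵥ x) * h x ∂μ := by
      simp only [periodization, ENNReal.tsum_mul_right]
    _ = ∑' g : G, ∫⁻ x in F, b (g +ᵥ x) * h x ∂μ :=
      lintegral_tsum fun g => (hterm g).aemeasurable
    _ = ∫⁻ x, b x * h x ∂μ := by simp only [hF.lintegral_eq_tsum'', h_inv]

lemma setLIntegral_periodization (hF : IsAddFundamentalDomain G F μ) (hb : Measurable b) :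
    ∫⁻ x in F, periodization G b x ∂μ = ∫⁻ x, b x ∂μ := by
  simpa using setLIntegral_periodization_mul hF hb (h := 1) measurable_one fun _ _ => rfl

lemma map_withDensity_periodization (hF : IsAddFundamentalDomain G F μ) (hb : Measurable b)
    {Z : Type*} [MeasurableSpace Z] {h : X → Z} (hh : Measurable h)
    (h_inv : ∀ (g : G) x, h (g +ᵥ x) = h x) :
    ((μ.restrict F).withDensity (periodization G b)).map h = (μ.withDensity b).map h := by
  have hper := measurable_periodization (G := G) hb
  refine Measure.ext_of_lintegral _ fun f hf => ?_
  have hfh : Measurable fun x => f (h x) := hf.comp hh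
  rw [lintegral_map hf hh, lintegral_map hf hh,
    lintegral_withDensity_eq_lintegral_mul _ hper hfh,
    lintegral_withDensity_eq_lintegral_mul _ hb hfh]
  exact setLIntegral_periodization_mul hF hb hfh fun g x => by rw [h_inv]

theorem setIntegral_periodization_smul {E : Type*} [NormedAddCommGroup E] [NormedSpace ℝ E]
    [MeasurableSpace E] [BorelSpace E] [SecondCountableTopology E]
    (hF : IsAddFundamentalDomain G F μ) (hb : Measurable b) (hb_fin : ∫⁻ x, b x ∂μ ≠ ∞)
    {h : X → E} (hh : Measurable h) (h_inv : ∀ (g : G) x, h (g +ᵥ x) = h x) :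
    ∫ x in F, (periodization G b x).toReal • h x ∂μ = ∫ x, (b x).toReal • h x ∂μ := by
  have hper := measurable_periodization (G := G) hb
  have hper_fin : ∀ᵐ x ∂μ.restrict F, periodization G b x < ∞ :=
    ae_lt_top hper ((setLIntegral_periodization hF hb).trans_ne hb_fin)
  have integral_eq_map (ν : Measure X) : ∫ x, h x ∂ν = ∫ z, z ∂ν.map h :=
    (integral_map hh.aemeasurable aestronglyMeasurable_id).symm
  rw [← integral_withDensity_eq_integral_toReal_smul hper hper_fin,
    ← integral_withDensity_eq_integral_toReal_smul hb (ae_lt_top hb hb_fin), integral_eq_map,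
    integral_eq_map, map_withDensity_periodization hF hb hh h_inv]

lemma setLIntegral_comp_equivariant (hF : IsAddFundamentalDomain G F μ) (φ : X ≃ᵐ X)
    (hφ : MeasurePreserving φ μ μ) (e : G ≃ G) (hφe : ∀ g x, φ (e g +ᵥ x) = g +ᵥ φ x)
    {f : X → ℝ≥0∞} (hf : ∀ (g : G) x, f (g +ᵥ x) = f x) :
    ∫⁻ x in F, f (φ x) ∂μ = ∫⁻ x in F, f x ∂μ := by
  have hpre : IsAddFundamentalDomain G (φ ⁻¹' F) μ :=
    hF.preimage_of_equiv hφ.quasiMeasurePreserving e.bijective hφe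
  have hfφ (g : G) (x : X) : f (φ (g +ᵥ x)) = f (φ x) := by
    rw [← e.apply_symm_apply g, hφe, hf]
  rw [hF.setLIntegral_eq hpre _ hfφ, hφ.setLIntegral_comp_preimage_emb φ.measurableEmbedding]

end Periodization

section Translation

variable {E : Type*} [AddCommGroup E] {Λ : AddSubgroup E}

lemma periodization_comp_sub_left (b : E → ℝ≥0∞) (ξ η : E) :
    periodization Λ (fun η => b (ξ - η)) η = periodization Λ b (ξ - η) := by
  rw [periodization, ← (Equiv.neg Λ).tsum_eq]
  refine tsum_congr fun l => congrArg b ?_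
  simp only [Equiv.neg_apply, AddSubgroup.vadd_def, AddSubgroup.coe_neg, vadd_eq_add]
  abel

variable [MeasurableSpace E] [MeasurableAdd₂ E] [Countable Λ] {μ : Measure E}
  [μ.IsAddLeftInvariant] {F : Set E} {f : E → ℝ≥0∞}

lemma setLIntegral_comp_sub_left [MeasurableNeg E] [μ.IsNegInvariant]
    (hF : IsAddFundamentalDomain Λ F μ) (hf : ∀ (l : Λ) x, f (l +ᵥ x) = f x) (ξ : E) :
    ∫⁻ η in F, f (ξ - η) ∂μ = ∫⁻ x in F, f x ∂μ := by
  refine setLIntegral_comp_equivariant hF (.subLeft ξ) (Measure.measurePreserving_sub_left μ ξ)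
    (Equiv.neg Λ) (fun l x => ?_) hf
  change ξ - (-(l : E) + x) = l + (ξ - x)
  abel

lemma setLIntegral_comp_sub_right (hF : IsAddFundamentalDomain Λ F μ)
    (hf : ∀ (l : Λ) x, f (l +ᵥ x) = f x) (η : E) :
    ∫⁻ ξ in F, f (ξ - η) ∂μ = ∫⁻ x in F, f x ∂μ :=
  setLIntegral_comp_equivariant hF (.subRight η) (measurePreserving_sub_right μ η)
    (Equiv.refl Λ) (fun l x => add_sub_assoc (l : E) x η) hf

end Translation

section ConvolutionDominated

lemma monotone_indicator_Ioi_id (c : ℝ≥0∞) : Monotone ((Ioi c).indicator id) := fun s t hst => by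
  by_cases hs : s ∈ Ioi c
  · rwa [indicator_of_mem hs, indicator_of_mem (show t ∈ Ioi c from hs.trans_le hst)]
  · rw [indicator_of_notMem hs]
    exact zero_le

lemma exists_lintegral_tail_le {X : Type*} [MeasurableSpace X] {m : Measure X} {f : X → ℝ≥0∞}
    (hf : Measurable f) (hf_fin : ∫⁻ x, f x ∂m ≠ ∞) {ε : ℝ≥0∞} (hε : 0 < ε) :
    ∃ N : ℝ≥0, ∫⁻ x, (Ioi (N : ℝ≥0∞)).indicator id (f x) ∂m ≤ ε := by
  have hlim : Tendsto (fun N : ℕ => ∫⁻ x, (Ioi (N : ℝ≥0∞)).indicator id (f x) ∂m) atTop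
      (𝓝 (∫⁻ _, 0 ∂m)) := by
    refine tendsto_lintegral_of_dominated_convergence f
      (fun N => (measurable_id.indicator measurableSet_Ioi).comp hf)
      (fun N => .of_forall fun x => indicator_le_self _ _ _) hf_fin ?_
    filter_upwards [ae_lt_top hf hf_fin] with x hx
    obtain ⟨N₀, hN₀⟩ := ENNReal.exists_nat_gt hx.ne
    refine tendsto_const_nhds.congr' ?_
    filter_upwards [eventually_ge_atTop N₀] with N hN
    have hle : f x ≤ N := hN₀.le.trans (by exact_mod_cast hN)
    exact (indicator_of_notMem (not_lt.2 hle) id).symm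
  rw [lintegral_zero] at hlim
  obtain ⟨N, hN⟩ := (hlim.eventually_le_const hε).exists
  exact ⟨N, by simpa using hN⟩

variable {E S 𝕜 : Type*} [AddCommGroup E] [MeasurableSpace E] [MeasurableAdd₂ E]
  [MeasurableSpace S] [RCLike 𝕜] {Λ : AddSubgroup E} [Countable Λ] {μ : Measure E}
  [μ.IsAddLeftInvariant] {F : Set E} {ν : Measure S}
  {α : E → ℝ≥0∞} {τ : ℝ≥0∞ → ℝ≥0∞} {k : E × E × S → 𝕜}

lemma ae_lintegral_section_left_le (hF : IsAddFundamentalDomain Λ F μ)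
    (hα_inv : ∀ (l : Λ) x, α (l +ᵥ x) = α x)
    (hkα : ∀ᵐ s ∂ν, ∀ ξ η, ‖k (ξ, η, s)‖ₑ ≤ α (ξ - η)) (hτ : Monotone τ) :
    ∀ᵐ p ∂(μ.restrict F).prod ν,
      ∫⁻ ξ in F, τ ‖k (ξ, p)‖ₑ ∂μ ≤ ∫⁻ x in F, τ (α x) ∂μ := by
  filter_upwards [Measure.quasiMeasurePreserving_snd.ae hkα] with p hp
  calc ∫⁻ ξ in F, τ ‖k (ξ, p)‖ₑ ∂μ
    _ ≤ ∫⁻ ξ in F, τ (α (ξ - p.1)) ∂μ := lintegral_mono fun ξ => hτ (hp ξ p.1)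
    _ = ∫⁻ x in F, τ (α x) ∂μ :=
      setLIntegral_comp_sub_right hF (f := fun x => τ (α x)) (fun l x => by rw [hα_inv]) p.1

variable [MeasurableNeg E] [μ.IsNegInvariant] [IsProbabilityMeasure ν]

lemma lintegral_section_right_le (hF : IsAddFundamentalDomain Λ F μ)
    (hα : Measurable α) (hα_inv : ∀ (l : Λ) x, α (l +ᵥ x) = α x)
    (hkα : ∀ᵐ s ∂ν, ∀ ξ η, ‖k (ξ, η, s)‖ₑ ≤ α (ξ - η)) (hτ : Monotone τ) (hτm : Measurable τ)
    (ξ : E) :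
    ∫⁻ p, τ ‖k (ξ, p)‖ₑ ∂(μ.restrict F).prod ν ≤ ∫⁻ x in F, τ (α x) ∂μ := by
  calc ∫⁻ p, τ ‖k (ξ, p)‖ₑ ∂(μ.restrict F).prod ν
    _ ≤ ∫⁻ p, τ (α (ξ - p.1)) ∂(μ.restrict F).prod ν := by
      refine lintegral_mono_ae ?_
      filter_upwards [Measure.quasiMeasurePreserving_snd.ae hkα] with p hp using hτ (hp ξ p.1)
    _ = ∫⁻ η in F, τ (α (ξ - η)) ∂μ :=
      measurePreserving_fst.lintegral_comp (hτm.comp (hα.comp (measurable_id.const_sub ξ)))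
    _ = ∫⁻ x in F, τ (α x) ∂μ :=
      setLIntegral_comp_sub_left hF (f := fun x => τ (α x)) (fun l x => by rw [hα_inv]) ξ

theorem exists_isCompactOperator_of_enorm_le_sub
    (hF : IsAddFundamentalDomain Λ F μ) (hF_fin : μ F ≠ ∞) (hk : Measurable k)
    (hα : Measurable α) (hα_inv : ∀ (l : Λ) x, α (l +ᵥ x) = α x)
    (hα_fin : ∫⁻ x in F, α x ∂μ ≠ ∞)
    (hkα : ∀ᵐ s ∂ν, ∀ ξ η, ‖k (ξ, η, s)‖ₑ ≤ α (ξ - η)) :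
    ∃ T : Lp 𝕜 2 ((μ.restrict F).prod ν) →L[𝕜] Lp 𝕜 2 (μ.restrict F),
      HasKernel T k ∧ IsCompactOperator T ∧ ‖T‖ ≤ (∫⁻ x in F, α x ∂μ).toReal := by
  have : IsFiniteMeasure (μ.restrict F) := isFiniteMeasure_restrict.2 hF_fin
  have hbound : KernelBound (μ.restrict F) ((μ.restrict F).prod ν) k
      (∫⁻ x in F, α x ∂μ).toNNReal := by
    rw [← NNReal.sqrt_mul_self (∫⁻ x in F, α x ∂μ).toNNReal]
    refine .of_lintegral_enorm_le hk.aestronglyMeasurable (.of_forall fun ξ => ?_) ?_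
    · rw [ENNReal.coe_toNNReal hα_fin]
      exact lintegral_section_right_le hF hα hα_inv hkα monotone_id measurable_id ξ
    · rw [ENNReal.coe_toNNReal hα_fin]
      exact ae_lintegral_section_left_le hF hα_inv hkα monotone_id
  obtain ⟨T, hT⟩ := hbound.exists_hasKernel hk.aestronglyMeasurable
  refine ⟨T, hT, hT.isCompactOperator_of_tails hk fun ε hε => ?_, hT.opNorm_le hbound⟩
  obtain ⟨N, hN⟩ := exists_lintegral_tail_le hα hα_fin (ENNReal.coe_pos.2 hε)
  have hmono : Monotone ((Ioi (N : ℝ≥0∞)).indicator id) := monotone_indicator_Ioi_id N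
  have hmeas : Measurable ((Ioi (N : ℝ≥0∞)).indicator id) :=
    measurable_id.indicator measurableSet_Ioi
  refine ⟨N, .of_forall fun ξ => ?_, ?_⟩
  · exact (lintegral_section_right_le hF hα hα_inv hkα hmono hmeas ξ).trans hN
  · filter_upwards [ae_lintegral_section_left_le hF hα_inv hkα hmono] with p hp
    exact hp.trans hN

end ConvolutionDominated

section UnitLattice

variable {d : ℕ}

/-- The lattice `ℤ^d`, acting on `ℝ^d` by translations. It is encoded as Mathlib's integral span of
the standard basis so that `cube d` is one of Mathlib's fundamental domains. -/
def unitLattice (d : ℕ) : AddSubgroup (Fin d → ℝ) :=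
  (Submodule.span ℤ (range (Pi.basisFun ℝ (Fin d)))).toAddSubgroup

instance : Countable (unitLattice d) :=
  inferInstanceAs (Countable (Submodule.span ℤ (range (Pi.basisFun ℝ (Fin d)))))

lemma exists_intCast_of_mem_unitLattice {x : Fin d → ℝ} (hx : x ∈ unitLattice d) :
    ∃ k : Fin d → ℤ, x = fun i => (k i : ℝ) := by
  choose k hk using ((Pi.basisFun ℝ (Fin d)).mem_span_iff_repr_mem ℤ x).1 hx
  exact ⟨k, funext fun i => (hk i).symm⟩

lemma isAddFundamentalDomain_cube : IsAddFundamentalDomain (unitLattice d) (cube d) := by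
  rw [cube, ← ZSpan.fundamentalDomain_pi_basisFun]
  exact ZSpan.isAddFundamentalDomain' _ _

lemma volume_cube : volume (cube d) = 1 := by
  simp [cube, Real.volume_pi_Ico]

lemma fract_vadd (l : unitLattice d) (x : Fin d → ℝ) : fract (l +ᵥ x) = fract x := by
  obtain ⟨k, hk⟩ := exists_intCast_of_mem_unitLattice l.2
  funext i
  rw [AddSubgroup.vadd_def, hk]
  exact Int.fract_intCast_add (k i) (x i)

lemma fract_of_mem_cube {x : Fin d → ℝ} (hx : x ∈ cube d) : fract x = x :=
  funext fun i => Int.fract_eq_self.2 (hx i (mem_univ i))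

lemma measurable_fract_pi : Measurable (fract : (Fin d → ℝ) → Fin d → ℝ) :=
  measurable_pi_lambda _ fun i => (measurable_pi_apply i).fract

end UnitLattice

lemma measurable_intervalIntegral_zero {X : Type*} [MeasurableSpace X] {f : X → ℝ → ℝ}
    (hf : Measurable fun p : X × ℝ => f p.1 p.2) :
    Measurable fun p : X × ℝ => ∫ τ in (0 : ℝ)..p.2, f p.1 τ := by
  have hscale (p : X × ℝ) : ∫ τ in (0 : ℝ)..p.2, f p.1 τ
      = p.2 * ∫ τ in Ioc (0 : ℝ) 1, f p.1 (τ * p.2) := by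
    rw [← intervalIntegral.integral_of_le zero_le_one, ← smul_eq_mul,
      intervalIntegral.smul_integral_comp_mul_right, zero_mul, one_mul]
  have hmeas : Measurable fun q : (X × ℝ) × ℝ => f q.1.1 (q.2 * q.1.2) := by fun_prop
  simp only [hscale]
  exact measurable_snd.mul hmeas.stronglyMeasurable.integral_prod_right'.measurable

section JumpKernel

variable {d : ℕ} {a : (Fin d → ℝ) → ℝ} {μ : (Fin d → ℝ) → (Fin d → ℝ) → ℝ → ℝ} {μp : ℝ}

lemma Gfun_nonneg (ha : ∀ z, 0 ≤ a z) (hμ : ∀ ξ η s, 0 ≤ μ ξ η s) (ξ : Fin d → ℝ) (s : ℝ) :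
    0 ≤ Gfun a μ ξ s :=
  integral_nonneg fun η => mul_nonneg (ha _) (hμ ξ η s)

lemma Gfun_le (ha : ∀ z, 0 ≤ a z) (ha_int : Integrable a) (hμ : ∀ ξ η s, 0 ≤ μ ξ η s)
    (hμp : ∀ ξ η s, μ ξ η s ≤ μp) (ξ : Fin d → ℝ) (s : ℝ) :
    Gfun a μ ξ s ≤ μp * ∫ z, a z :=
  calc Gfun a μ ξ s
    _ ≤ ∫ η, a (ξ - η) * μp :=
      integral_mono_of_nonneg (.of_forall fun η => mul_nonneg (ha _) (hμ ξ η s))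
        ((ha_int.comp_sub_left ξ).mul_const μp)
        (.of_forall fun η => mul_le_mul_of_nonneg_left (hμp ξ η s) (ha _))
    _ = μp * ∫ z, a z := by rw [integral_mul_const, integral_sub_left_eq_self, mul_comm]

lemma Gfun_add_intCast
    (hμ_per₁ : ∀ ξ η s, ∀ k : Fin d → ℤ, μ (ξ + fun i => (k i : ℝ)) η s = μ ξ η s)
    (hμ_per₂ : ∀ ξ η s, ∀ k : Fin d → ℤ, μ ξ (η + fun i => (k i : ℝ)) s = μ ξ η s)
    (ξ : Fin d → ℝ) (s : ℝ) (k : Fin d → ℤ) :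
    Gfun a μ (ξ + fun i => (k i : ℝ)) s = Gfun a μ ξ s := by
  rw [Gfun, ← integral_add_right_eq_self _ fun i => (k i : ℝ)]
  simp only [add_sub_add_right_eq_sub, hμ_per₁, hμ_per₂, Gfun]

lemma measurable_Gfun (ha : Measurable a)
    (hμ : Measurable fun p : (Fin d → ℝ) × (Fin d → ℝ) × ℝ => μ p.1 p.2.1 p.2.2) :
    Measurable fun p : (Fin d → ℝ) × ℝ => Gfun a μ p.1 p.2 := by
  have hmeas : Measurable fun q : ((Fin d → ℝ) × ℝ) × (Fin d → ℝ) =>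
      a (q.1.1 - q.2) * μ q.1.1 q.2 q.1.2 :=
    (ha.comp (by fun_prop)).mul (hμ.comp (f := fun q : ((Fin d → ℝ) × ℝ) × (Fin d → ℝ) =>
      (q.1.1, q.2, q.1.2)) (by fun_prop))
  exact hmeas.stronglyMeasurable.integral_prod_right'.measurable

variable (a μ) in
/-- The factor `μ(ξ,η,s) exp(∫₀^s (G(ξ,τ) - G(η,τ)) dτ)` multiplying `a(ξ-η)` in the kernel of the
operator. -/
def jumpWeight (ξ η : Fin d → ℝ) (s : ℝ) : ℝ :=
  μ ξ η s * Real.exp (∫ τ in (0 : ℝ)..s, (Gfun a μ ξ τ - Gfun a μ η τ))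

lemma jumpWeight_nonneg (hμ : ∀ ξ η s, 0 ≤ μ ξ η s) (ξ η : Fin d → ℝ) (s : ℝ) :
    0 ≤ jumpWeight a μ ξ η s :=
  mul_nonneg (hμ ξ η s) (Real.exp_nonneg _)

lemma integral_Gfun_sub_Gfun_le (ha : ∀ z, 0 ≤ a z) (ha_int : Integrable a)
    (hμ : ∀ ξ η s, 0 ≤ μ ξ η s) (hμp : ∀ ξ η s, μ ξ η s ≤ μp) (ξ η : Fin d → ℝ) {s : ℝ}
    (hs : s ∈ Icc (0 : ℝ) 1) :
    ∫ τ in (0 : ℝ)..s, (Gfun a μ ξ τ - Gfun a μ η τ) ≤ μp * ∫ z, a z := by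
  have hG_nonneg := Gfun_nonneg ha hμ
  have hG_le := Gfun_le ha ha_int hμ hμp
  have hdiff (τ : ℝ) : ‖Gfun a μ ξ τ - Gfun a μ η τ‖ ≤ μp * ∫ z, a z :=
    abs_sub_le_of_nonneg_of_le (hG_nonneg ξ τ) (hG_le ξ τ) (hG_nonneg η τ) (hG_le η τ)
  calc ∫ τ in (0 : ℝ)..s, (Gfun a μ ξ τ - Gfun a μ η τ)
    _ ≤ (μp * ∫ z, a z) * |s - 0| := (Real.le_norm_self _).trans
      (intervalIntegral.norm_integral_le_of_norm_le_const fun τ _ => hdiff τ)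
    _ ≤ μp * ∫ z, a z := by
      rw [sub_zero, abs_of_nonneg hs.1]
      exact mul_le_of_le_one_right ((norm_nonneg _).trans (hdiff 0)) hs.2

lemma jumpWeight_le (ha : ∀ z, 0 ≤ a z) (ha_int : Integrable a)
    (hμ : ∀ ξ η s, 0 ≤ μ ξ η s) (hμp : ∀ ξ η s, μ ξ η s ≤ μp) (ξ η : Fin d → ℝ) {s : ℝ}
    (hs : s ∈ Icc (0 : ℝ) 1) :
    jumpWeight a μ ξ η s ≤ μp * Real.exp (μp * ∫ z, a z) :=
  mul_le_mul (hμp ξ η s) (Real.exp_le_exp.2 (integral_Gfun_sub_Gfun_le ha ha_int hμ hμp ξ η hs))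
    (Real.exp_nonneg _) ((hμ ξ η s).trans (hμp ξ η s))

lemma jumpWeight_vadd_right
    (hμ_per₁ : ∀ ξ η s, ∀ k : Fin d → ℤ, μ (ξ + fun i => (k i : ℝ)) η s = μ ξ η s)
    (hμ_per₂ : ∀ ξ η s, ∀ k : Fin d → ℤ, μ ξ (η + fun i => (k i : ℝ)) s = μ ξ η s)
    (ξ η : Fin d → ℝ) (s : ℝ) (l : unitLattice d) :
    jumpWeight a μ ξ (l +ᵥ η) s = jumpWeight a μ ξ η s := by
  obtain ⟨k, hk⟩ := exists_intCast_of_mem_unitLattice l.2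
  simp only [AddSubgroup.vadd_def, vadd_eq_add, hk, add_comm _ η, jumpWeight, hμ_per₂,
    Gfun_add_intCast hμ_per₁ hμ_per₂]

lemma measurable_jumpWeight (ha : Measurable a)
    (hμ : Measurable fun p : (Fin d → ℝ) × (Fin d → ℝ) × ℝ => μ p.1 p.2.1 p.2.2) :
    Measurable fun p : (Fin d → ℝ) × (Fin d → ℝ) × ℝ => jumpWeight a μ p.1 p.2.1 p.2.2 := by
  have hG := measurable_Gfun ha hμ
  have hdiff : Measurable fun q : ((Fin d → ℝ) × (Fin d → ℝ)) × ℝ =>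
      Gfun a μ q.1.1 q.2 - Gfun a μ q.1.2 q.2 :=
    (hG.comp (f := fun q : ((Fin d → ℝ) × (Fin d → ℝ)) × ℝ => (q.1.1, q.2)) (by fun_prop)).sub
      (hG.comp (f := fun q : ((Fin d → ℝ) × (Fin d → ℝ)) × ℝ => (q.1.2, q.2)) (by fun_prop))
  exact hμ.mul ((measurable_intervalIntegral_zero (f := fun (x : (Fin d → ℝ) × (Fin d → ℝ)) τ =>
    Gfun a μ x.1 τ - Gfun a μ x.2 τ) hdiff).comp (f := fun p : (Fin d → ℝ) × (Fin d → ℝ) × ℝ =>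
      ((p.1, p.2.1), p.2.2)) (by fun_prop)).exp

variable (a) in
/-- The periodization over `ℤ^d` of a nonnegative function `a`, as a function with values in
`[0, ∞]`, so that it is defined everywhere. -/
def latticeSum : (Fin d → ℝ) → ℝ≥0∞ := periodization (unitLattice d) fun z => ENNReal.ofReal (a z)

lemma latticeSum_vadd (l : unitLattice d) (x : Fin d → ℝ) :
    latticeSum a (l +ᵥ x) = latticeSum a x :=
  periodization_vadd _ l x

lemma measurable_latticeSum (ha : Measurable a) : Measurable (latticeSum a) :=
  measurable_periodization ha.ennreal_ofReal

lemma setLIntegral_latticeSum (ham : Measurable a) (ha : ∀ z, 0 ≤ a z) (ha_int : Integrable a) :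
    ∫⁻ x in cube d, latticeSum a x = ENNReal.ofReal (∫ z, a z) := by
  rw [ofReal_integral_eq_lintegral_ofReal ha_int (.of_forall ha)]
  exact setLIntegral_periodization isAddFundamentalDomain_cube ham.ennreal_ofReal

lemma setIntegral_latticeSum_sub_mul (ham : Measurable a) (ha : ∀ z, 0 ≤ a z)
    (ha_int : Integrable a) {h : (Fin d → ℝ) → ℝ} (hh : Measurable h)
    (h_inv : ∀ (l : unitLattice d) x, h (l +ᵥ x) = h x) (ξ : Fin d → ℝ) :
    ∫ η in cube d, (latticeSum a (ξ - η)).toReal * h η = ∫ η, a (ξ - η) * h η := by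
  have ham_sub : Measurable fun η => ENNReal.ofReal (a (ξ - η)) :=
    (ham.comp (measurable_id.const_sub ξ)).ennreal_ofReal
  have hfin : ∫⁻ η, ENNReal.ofReal (a (ξ - η)) ≠ ∞ :=
    ((hasFiniteIntegral_iff_ofReal (.of_forall fun η => ha _)).1
      (ha_int.comp_sub_left ξ).hasFiniteIntegral).ne
  have hunfold := setIntegral_periodization_smul isAddFundamentalDomain_cube ham_sub hfin hh h_inv
  simpa only [periodization_comp_sub_left (Λ := unitLattice d) fun z => ENNReal.ofReal (a z),
    ENNReal.toReal_ofReal (ha _), smul_eq_mul, latticeSum] using hunfold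

variable (a μ) in
/-- The kernel, with respect to the cell `cube d × (0,1)`, of the integral operator: folding the
integral over `ℝ^d` into the cell replaces `a` by its periodization. -/
def torusKernel (p : (Fin d → ℝ) × (Fin d → ℝ) × ℝ) : ℝ :=
  (latticeSum a (p.1 - p.2.1)).toReal * jumpWeight a μ p.1 p.2.1 p.2.2

lemma measurable_torusKernel (ha : Measurable a)
    (hμ : Measurable fun p : (Fin d → ℝ) × (Fin d → ℝ) × ℝ => μ p.1 p.2.1 p.2.2) :
    Measurable (torusKernel a μ) :=
  ((measurable_latticeSum ha).comp (by fun_prop)).ennreal_toReal.mul (measurable_jumpWeight ha hμ)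

lemma enorm_torusKernel_le (ha : ∀ z, 0 ≤ a z) (ha_int : Integrable a)
    (hμ : ∀ ξ η s, 0 ≤ μ ξ η s) (hμp : ∀ ξ η s, μ ξ η s ≤ μp) (ξ η : Fin d → ℝ) {s : ℝ}
    (hs : s ∈ Icc (0 : ℝ) 1) :
    ‖torusKernel a μ (ξ, η, s)‖ₑ
      ≤ ENNReal.ofReal (μp * Real.exp (μp * ∫ z, a z)) * latticeSum a (ξ - η) := by
  rw [torusKernel, enorm_mul, mul_comm, Real.enorm_of_nonneg (jumpWeight_nonneg hμ ξ η s),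
    Real.enorm_of_nonneg ENNReal.toReal_nonneg]
  gcongr
  · exact jumpWeight_le ha ha_int hμ hμp ξ η hs
  · exact ENNReal.ofReal_toReal_le

lemma setIntegral_torusKernel_mul (ham : Measurable a) (ha : ∀ z, 0 ≤ a z)
    (ha_int : Integrable a)
    (hμ : Measurable fun p : (Fin d → ℝ) × (Fin d → ℝ) × ℝ => μ p.1 p.2.1 p.2.2)
    (hμ_per₁ : ∀ ξ η s, ∀ k : Fin d → ℤ, μ (ξ + fun i => (k i : ℝ)) η s = μ ξ η s)
    (hμ_per₂ : ∀ ξ η s, ∀ k : Fin d → ℤ, μ ξ (η + fun i => (k i : ℝ)) s = μ ξ η s)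
    {ψ : (Fin d → ℝ) → ℝ} (hψ : Measurable ψ) (ξ : Fin d → ℝ) (s : ℝ) :
    ∫ η in cube d, torusKernel a μ (ξ, η, s) * ψ η
      = ∫ η, a (ξ - η) * μ ξ η s *
          Real.exp (∫ τ in (0 : ℝ)..s, (Gfun a μ ξ τ - Gfun a μ η τ)) * ψ (fract η) := by
  have hmeas : Measurable fun η => jumpWeight a μ ξ η s * ψ (fract η) :=
    ((measurable_jumpWeight ham hμ).comp (f := fun η => (ξ, η, s)) (by fun_prop)).mul
      (hψ.comp measurable_fract_pi)
  have hinv (l : unitLattice d) (η : Fin d → ℝ) :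
      jumpWeight a μ ξ (l +ᵥ η) s * ψ (fract (l +ᵥ η)) = jumpWeight a μ ξ η s * ψ (fract η) := by
    rw [jumpWeight_vadd_right hμ_per₁ hμ_per₂, fract_vadd]
  calc ∫ η in cube d, torusKernel a μ (ξ, η, s) * ψ η
    _ = ∫ η in cube d, (latticeSum a (ξ - η)).toReal * (jumpWeight a μ ξ η s * ψ (fract η)) :=
      setIntegral_congr_fun (.univ_pi fun _ => measurableSet_Ico) fun η hη => by
        simp only [torusKernel, fract_of_mem_cube hη, mul_assoc]
    _ = ∫ η, a (ξ - η) * (jumpWeight a μ ξ η s * ψ (fract η)) :=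
      setIntegral_latticeSum_sub_mul ham ha ha_int hmeas hinv ξ
    _ = _ := by simp only [jumpWeight, mul_assoc]

lemma exists_isCompactOperator_torusKernel (ham : Measurable a) (ha : ∀ z, 0 ≤ a z)
    (ha_int : Integrable a)
    (hμm : Measurable fun p : (Fin d → ℝ) × (Fin d → ℝ) × ℝ => μ p.1 p.2.1 p.2.2)
    (hμ : ∀ ξ η s, 0 ≤ μ ξ η s) (hμp : ∀ ξ η s, μ ξ η s ≤ μp) :
    ∃ K : Lp ℝ 2 ((volume.restrict (cube d)).prod (volume.restrict (Ioo (0 : ℝ) 1))) →L[ℝ]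
        Lp ℝ 2 (volume.restrict (cube d)),
      HasKernel K (torusKernel a μ) ∧ IsCompactOperator K ∧
      ‖K‖ ≤ μp * (∫ z, a z) * Real.exp (μp * ∫ z, a z) := by
  have : IsProbabilityMeasure (volume.restrict (Ioo (0 : ℝ) 1)) := ⟨by simp⟩
  set C := μp * Real.exp (μp * ∫ z, a z)
  have hC : 0 ≤ C := mul_nonneg ((hμ 0 0 0).trans (hμp 0 0 0)) (Real.exp_nonneg _)
  have hmass : ∫⁻ x in cube d, ENNReal.ofReal C * latticeSum a x
      = ENNReal.ofReal (C * ∫ z, a z) := by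
    rw [lintegral_const_mul _ (measurable_latticeSum ham), setLIntegral_latticeSum ham ha ha_int,
      ENNReal.ofReal_mul hC]
  obtain ⟨K, hK, hKcomp, hKnorm⟩ := exists_isCompactOperator_of_enorm_le_sub
    (ν := volume.restrict (Ioo (0 : ℝ) 1)) (α := fun x => ENNReal.ofReal C * latticeSum a x)
    isAddFundamentalDomain_cube (by simp [volume_cube]) (measurable_torusKernel ham hμm)
    ((measurable_latticeSum ham).const_mul _) (fun l x => by rw [latticeSum_vadd])
    (hmass.trans_ne ENNReal.ofReal_ne_top) (ae_restrict_of_forall_mem measurableSet_Ioo fun s hs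
      ξ η => enorm_torusKernel_le ha ha_int hμ hμp ξ η (Ioo_subset_Icc_self hs))
  refine ⟨K, hK, hKcomp, hKnorm.trans_eq ?_⟩
  rw [hmass, ENNReal.toReal_ofReal (mul_nonneg hC (integral_nonneg ha)), mul_right_comm]

end JumpKernel

theorem stmt12_general {d : ℕ} (a : (Fin d → ℝ) → ℝ) (μ : (Fin d → ℝ) → (Fin d → ℝ) → ℝ → ℝ)
    (μp : ℝ) (hameas : Measurable a) (hanonneg : ∀ z, 0 ≤ a z) (haint : Integrable a)
    (hμmeas : Measurable fun p : (Fin d → ℝ) × (Fin d → ℝ) × ℝ => μ p.1 p.2.1 p.2.2)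
    (hμper₁ : ∀ ξ η s, ∀ k : Fin d → ℤ, μ (ξ + fun i => (k i : ℝ)) η s = μ ξ η s)
    (hμper₂ : ∀ ξ η s, ∀ k : Fin d → ℤ, μ ξ (η + fun i => (k i : ℝ)) s = μ ξ η s)
    (hμnonneg : ∀ ξ η s, 0 ≤ μ ξ η s) (hμub : ∀ ξ η s, μ ξ η s ≤ μp) :
    ∃ K : Lp ℝ 2 (volume.restrict (cube d ×ˢ Set.Ioo (0 : ℝ) 1)) →L[ℝ]
        Lp ℝ 2 (volume.restrict (cube d)),
      IsCompactOperator ⇑K ∧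
      ‖K‖ ≤ μp * (∫ z, a z) * Real.exp (μp * ∫ z, a z) ∧
      ∀ Ψ : Lp ℝ 2 (volume.restrict (cube d ×ˢ Set.Ioo (0 : ℝ) 1)),
        ⇑(K Ψ) =ᵐ[volume.restrict (cube d)]
          fun ξ => ∫ s in Set.Ioo (0 : ℝ) 1, ∫ η,
            a (ξ - η) * μ ξ η s *
              Real.exp (∫ τ in (0 : ℝ)..s, (Gfun a μ ξ τ - Gfun a μ η τ)) *
              Ψ (fract η, s) := by
  rw [Measure.volume_eq_prod, ← Measure.prod_restrict]
  obtain ⟨K, hK, hKcomp, hKnorm⟩ :=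
    exists_isCompactOperator_torusKernel hameas hanonneg haint hμmeas hμnonneg hμub
  refine ⟨K, hKcomp, hKnorm, fun Ψ => ?_⟩
  filter_upwards [hK Ψ] with ξ ⟨hint, hKΨ⟩
  rw [hKΨ, integral_prod_symm _ hint]
  exact integral_congr_ae (.of_forall fun s => setIntegral_torusKernel_mul hameas hanonneg haint
    hμmeas hμper₁ hμper₂ ((Lp.stronglyMeasurable Ψ).measurable.comp measurable_prodMk_right) ξ s)

/-- The integral operator
`(KΨ)(ξ) = ∫₀¹∫_{ℝ^d} a(ξ-η) μ(ξ,η,s) exp(∫₀^s (G(ξ,τ)-G(η,τ)) dτ) Ψ(η,s) dη ds`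
is a compact operator from `L²(𝕋^{d+1})` to `L²(𝕋^d)` of norm at most `μ⁺ e^{μ⁺}`. -/
theorem stmt12 {d : ℕ} (hd : 1 ≤ d)
    (a : (Fin d → ℝ) → ℝ) (μ : (Fin d → ℝ) → (Fin d → ℝ) → ℝ → ℝ) (μm μp : ℝ)
    (hameas : Measurable a) (hanonneg : ∀ z, 0 ≤ a z)
    (haint : Integrable a) (hamass : ∫ z, a z = 1)
    (hamom : Integrable (fun z => ‖z‖ ^ 2 * a z))
    (hasymm : ∀ z, a (-z) = a z)
    (hμmeas : Measurable fun p : (Fin d → ℝ) × (Fin d → ℝ) × ℝ => μ p.1 p.2.1 p.2.2)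
    (hμper₁ : ∀ ξ η s, ∀ k : Fin d → ℤ, μ (ξ + fun i => (k i : ℝ)) η s = μ ξ η s)
    (hμper₂ : ∀ ξ η s, ∀ k : Fin d → ℤ, μ ξ (η + fun i => (k i : ℝ)) s = μ ξ η s)
    (hμper₃ : ∀ ξ η s, μ ξ η (s + 1) = μ ξ η s)
    (hμsymm : ∀ ξ η s, μ ξ η s = μ η ξ s)
    (hμm : 0 < μm) (hμlb : ∀ ξ η s, μm ≤ μ ξ η s) (hμub : ∀ ξ η s, μ ξ η s ≤ μp) :
    ∃ K : Lp ℝ 2 (volume.restrict (cube d ×ˢ Set.Ioo (0 : ℝ) 1)) →L[ℝ]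
        Lp ℝ 2 (volume.restrict (cube d)),
      IsCompactOperator ⇑K ∧
      ‖K‖ ≤ μp * Real.exp μp ∧
      ∀ Ψ : Lp ℝ 2 (volume.restrict (cube d ×ˢ Set.Ioo (0 : ℝ) 1)),
        ⇑(K Ψ) =ᵐ[volume.restrict (cube d)]
          fun ξ => ∫ s in Set.Ioo (0 : ℝ) 1, ∫ η,
            a (ξ - η) * μ ξ η s *
              Real.exp (∫ τ in (0 : ℝ)..s, (Gfun a μ ξ τ - Gfun a μ η τ)) *
              Ψ (fract η, s) := by
  simpa only [hamass, mul_one] using stmt12_general a μ μp hameas hanonneg haint hμmeas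
    hμper₁ hμper₂ (fun ξ η s => hμm.le.trans (hμlb ξ η s)) hμub
end
end
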